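/- Let d ∈ ℕ, 1 ≤ p,q < ∞, 0 < s < 1/p, and let S_d be an order 2 digital (t,d)-sequence over 𝔽_2 whose generating matrices E_i = (e_{i,k,ℓ})_{k,ℓ≥1} satisfy e_{i,k,ℓ} = 0 for all k > 2ℓ and all i ∈ {1,…,d}. Then there is a constant C > 0 depending only on p, q, s, d such that for all integers N ≥ 2: ∑_{j∈ℕ_{−1}^d} 2^{|j|(s−1/p+1)q} (∑_{m∈𝔻_j} |⟨D_{S_d}^N, h_{j,m}⟩|^p)^{q/p} ≤ C · 2^{qt} · N^{(s−1)q} (log N)^{d−1}. -/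

import Mathlib

open MeasureTheory
open scoped ENNReal

noncomputable section

/-- The closed unit cube `[0,1]^d`. -/
def unitCube (d : ℕ) : Set (Fin d → ℝ) := Set.univ.pi fun _ => Set.Icc (0:ℝ) 1

/-- The half-open unit cube `[0,1)^d`. -/
def unitCubeIco (d : ℕ) : Set (Fin d → ℝ) := Set.univ.pi fun _ => Set.Ico (0:ℝ) 1

/-- Discrepancy function of the first `N` points of the sequence `S` in `[0,1)^d`. -/
def discSeq (d : ℕ) (S : ℕ → Fin d → ℝ) (N : ℕ) (x : Fin d → ℝ) : ℝ :=
  (Nat.card {k : Fin N // ∀ i, S k i < x i} : ℝ) / N - ∏ i, x i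

/-- One-dimensional Haar function `h_{j,m}`, with `h_{-1,0} = 1_{[0,1)}`. -/
def haar1 (j : ℤ) (m : ℕ) (x : ℝ) : ℝ :=
  if j = -1 then (if 0 ≤ x ∧ x < 1 then 1 else 0)
  else if (m:ℝ)/2^j.toNat ≤ x ∧ x < ((m:ℝ) + 1/2)/2^j.toNat then 1
  else if ((m:ℝ) + 1/2)/2^j.toNat ≤ x ∧ x < ((m:ℝ)+1)/2^j.toNat then -1
  else 0

/-- `d`-dimensional (tensor product) Haar function. -/
def haarFn (d : ℕ) (j : Fin d → ℤ) (m : Fin d → ℕ) (x : Fin d → ℝ) : ℝ :=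
  ∏ i, haar1 (j i) (m i) (x i)

/-- Haar coefficient `⟨f, h_{j,m}⟩`. -/
def haarCoeff (d : ℕ) (f : (Fin d → ℝ) → ℝ) (j : Fin d → ℤ) (m : Fin d → ℕ) : ℝ :=
  ∫ x in unitCube d, f x * haarFn d j m x

/-- `|j| = max(j₁,0) + ⋯ + max(j_d,0)`. -/
def jnorm (d : ℕ) (j : Fin d → ℤ) : ℕ := ∑ i, (j i).toNat

/-- One-dimensional dyadic interval `I_{j,m}`. -/
def dyadicI (j : ℤ) (m : ℕ) : Set ℝ :=
  Set.Ico ((m:ℝ)/2^j.toNat) (((m:ℝ)+1)/2^j.toNat)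

/-- `d`-dimensional dyadic box `I_{j,m}`. -/
def dyadicBox (d : ℕ) (j : Fin d → ℤ) (m : Fin d → ℕ) : Set (Fin d → ℝ) :=
  Set.univ.pi fun i => dyadicI (j i) (m i)

/-- The index set `𝔻_j` as a finset. -/
def Dfin (d : ℕ) (j : Fin d → ℤ) : Finset (Fin d → ℕ) :=
  Fintype.piFinset fun i => Finset.range (2 ^ (j i).toNat)

/-- The index set `𝔻_j` for `j ∈ ℕ₀^d`. -/
def Dfin0 (d : ℕ) (j : Fin d → ℕ) : Finset (Fin d → ℕ) :=
  Fintype.piFinset fun i => Finset.range (2 ^ (j i))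

/-- Coordinate of the `k`-th point of a digital sequence over `𝔽₂` with generating
matrix `C` (`0`-based rows and columns). -/
def digitalCoord (C : ℕ → ℕ → ZMod 2) (k : ℕ) : ℝ :=
  ∑' i : ℕ,
    (((∑ ℓ ∈ Finset.range (k+1), C i ℓ * (if k.testBit ℓ then 1 else 0)).val : ℕ) : ℝ) / 2 ^ (i + 1)

/-- The digital sequence over `𝔽₂` generated by matrices `C 0, …, C (d-1)`. -/
def digitalSeq (d : ℕ) (C : Fin d → ℕ → ℕ → ZMod 2) : ℕ → Fin d → ℝ :=
  fun k j => digitalCoord (C j) k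

/-- `C 0, …, C (d-1)` generate an order `α` digital `(t,n,d)`-net over `𝔽₂`,
where the relevant submatrices have `q` rows (`q ≥ αn`) and `n` columns.
Row indices are `0`-based; the `1`-based row value of row `r` is `r+1`. -/
def IsOrderNet (α n t q d : ℕ) (C : Fin d → ℕ → ℕ → ZMod 2) : Prop :=
  ∀ (ν : Fin d → ℕ) (r : ∀ j : Fin d, Fin (ν j) → ℕ),
    (∀ j, StrictAnti (r j)) →
    (∀ j l, r j l < q) →
    (∑ j, ∑ l ∈ Finset.univ.filter (fun l : Fin (ν j) => (l:ℕ) < α), (r j l + 1)) ≤ α * n - t →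
    LinearIndependent (ZMod 2)
      (fun p : Σ j : Fin d, Fin (ν j) => fun col : Fin n => C p.1 (r p.1 p.2) col)

/-- `C 0, …, C (d-1)` generate an order `α` digital `(t,d)`-sequence over `𝔽₂`. -/
def IsOrderSeq (α t d : ℕ) (C : Fin d → ℕ → ℕ → ZMod 2) : Prop :=
  ∀ n : ℕ, t < α * n → IsOrderNet α n t (α * n) d C

/-- The condition `e_{i,k,ℓ} = 0` for all `k > 2ℓ` (in `1`-based indexing). -/
def Triangular2 (d : ℕ) (E : Fin d → ℕ → ℕ → ZMod 2) : Prop :=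
  ∀ i k ℓ, 2 * (ℓ + 1) < k + 1 → E i k ℓ = 0

open scoped Classical in
/-- The quantity `λ(U)⁻¹ ∑_{j ∈ ℕ₀^d} 2^{|j|} ∑_{m : I_{j,m} ⊆ U} ⟨f,h_{j,m}⟩²`. -/
def bmoSq (d : ℕ) (f : (Fin d → ℝ) → ℝ) (U : Set (Fin d → ℝ)) : ℝ≥0∞ :=
  (volume U)⁻¹ * ∑' j : Fin d → ℕ, ∑ m ∈ Dfin0 d j,
    if dyadicBox d (fun i => (j i : ℤ)) m ⊆ U then
      (2:ℝ≥0∞) ^ (∑ i, j i) * ENNReal.ofReal ((haarCoeff d f (fun i => (j i : ℤ)) m)^2)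
    else 0

/-- The BMO (semi-)norm `‖f | bmo^d‖`. -/
def bmoNorm (d : ℕ) (f : (Fin d → ℝ) → ℝ) : ℝ≥0∞ :=
  (⨆ U : {U : Set (Fin d → ℝ) // MeasurableSet U ∧ U ⊆ unitCubeIco d ∧ 0 < volume U},
    bmoSq d f U.1) ^ (1/2 : ℝ)

/-- The Orlicz norm of `f` on `[0,1)^d` with respect to the Young function `ψ`,
with the convention `inf ∅ = ∞`. -/
def orliczNorm (d : ℕ) (ψ : ℝ → ℝ) (f : (Fin d → ℝ) → ℝ) : ℝ≥0∞ :=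
  ⨅ K : {K : ℝ // 0 < K ∧ ∫ x in unitCubeIco d, ψ (|f x| / K) ≤ 1}, ENNReal.ofReal K.1

/-- `ψ` is a Young function which coincides with `exp(x^β) - 1` for all large `x`. -/
def IsYoungExp (β : ℝ) (ψ : ℝ → ℝ) : Prop :=
  ConvexOn ℝ (Set.Ici 0) ψ ∧ ψ 0 = 0 ∧ (∀ x : ℝ, 0 < x → 0 < ψ x) ∧
    ∃ x₀ : ℝ, ∀ x ≥ x₀, ψ x = Real.exp (x ^ β) - 1

/-- The set of valid Haar indices `j ∈ ℕ_{-1}^d`. -/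
def validJ (d : ℕ) : Set (Fin d → ℤ) := {j | ∀ i, -1 ≤ j i}

/-- The `q`-th power of the Haar-characterization of the `S^s_{p,q}B` norm:
`∑_{j ∈ ℕ_{-1}^d} 2^{|j|(s-1/p+1)q} (∑_{m ∈ 𝔻_j} |⟨f,h_{j,m}⟩|^p)^{q/p}`. -/
def besovSum (d : ℕ) (p q s : ℝ) (f : (Fin d → ℝ) → ℝ) : ℝ≥0∞ :=
  ∑' j : validJ d,
    ENNReal.ofReal ((2:ℝ) ^ ((jnorm d j.1 : ℝ) * (s - 1/p + 1) * q) *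
      (∑ m ∈ Dfin d j.1, |haarCoeff d f j.1 m| ^ p) ^ (q / p))

/-- Coordinate of the `k`-th point of a digital net with `q × n` generating matrix `C`. -/
def netCoord (q n : ℕ) (C : ℕ → ℕ → ZMod 2) (k : ℕ) : ℝ :=
  ∑ i ∈ Finset.range q,
    ((∑ ℓ ∈ Finset.range n, C i ℓ * (if k.testBit ℓ then 1 else 0)).val : ℝ) / 2 ^ (i + 1)

/-- `n_{μ+1}`, with the convention `n_{r+1} = log₂ N` (indices `1`-based, `n` stored `0`-based). -/
def nExt (r : ℕ) (n : Fin r → ℕ) (N : ℕ) (μ : ℕ) : ℝ :=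
  if h : μ < r then (n ⟨μ, h⟩ : ℝ) else Real.logb 2 N

/-- `n_μ`, with the convention `n_0 = 0` (indices `1`-based, `n` stored `0`-based). -/
def nPrev (r : ℕ) (n : Fin r → ℕ) (μ : ℕ) : ℝ :=
  if h : 1 ≤ μ ∧ μ ≤ r then (n ⟨μ - 1, by omega⟩ : ℝ) else 0

/-- The dyadic square function `Sf`, valued in `ℝ≥0∞`. -/
def sqFnE (d : ℕ) (f : (Fin d → ℝ) → ℝ) (x : Fin d → ℝ) : ℝ≥0∞ :=
  (∑' j : validJ d, ∑ m ∈ Dfin d j.1,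
    ENNReal.ofReal ((2:ℝ) ^ (2 * jnorm d j.1) * (haarCoeff d f j.1 m)^2 *
      (dyadicBox d j.1 m).indicator (fun _ => (1:ℝ)) x)) ^ (1/2 : ℝ)

/-- `sup_{p > 1} p^{-1/β} ‖f‖_{L_p([0,1]^d)}`. -/
def supLp (d : ℕ) (β : ℝ) (f : (Fin d → ℝ) → ℝ) : ℝ≥0∞ :=
  ⨆ p : {p : ℝ // 1 < p},
    ENNReal.ofReal ((p:ℝ) ^ (-(1/β))) * eLpNorm f (ENNReal.ofReal (p:ℝ)) (volume.restrict (unitCube d))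

/-- `‖f | 𝒟₀^d‖² = ∑_{j ∈ ℕ₀^d} 2^{|j|} ∑_{m ∈ 𝔻_j} ⟨f,h_{j,m}⟩²`. -/
def dNormSq (d : ℕ) (f : (Fin d → ℝ) → ℝ) : ℝ≥0∞ :=
  ∑' j : Fin d → ℕ, ∑ m ∈ Dfin0 d j,
    ENNReal.ofReal ((2:ℝ) ^ (∑ i, j i) * (haarCoeff d f (fun i => (j i : ℤ)) m)^2)

/-- `‖f | 𝒟₀^d‖`. -/
def dNorm (d : ℕ) (f : (Fin d → ℝ) → ℝ) : ℝ≥0∞ := (dNormSq d f) ^ (1/2 : ℝ)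

/-!
Each binary digit `1` of `N`, say the `n`-th, contributes a dyadic block of `2 ^ n` consecutive
indices, and the points of a block form an order `2` net up to a digital shift. Expanding the
primitives of the Haar functions into Walsh series, the order `2` property annihilates the terms of
low dual weight, so on a level `|j|` below `n - t / 2` the block contributes at most about
`2 ^ (3 * t / 4 - n / 2 - |j| / 2)` to every coefficient of `N` times the discrepancy. On a finer
level one only counts points: there are `2 ^ n` in total and at most `2 ^ (t / 2)` in each box. In
both regimes the `ℓ^p` norms of the block contributions decay geometrically in the distance of `n`
from `|j| + t / 2`, so that their sum over `n` is governed by the largest one. As `0 < s < 1 / p`,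
the resulting weighted norms decay geometrically in `||j| - log₂ N|`, and the power of `log N`
counts the `j` on the critical level `|j| ≈ log₂ N`.
-/

/-! ### Haar coefficients of the discrepancy function -/

/-- The inner product of `h_{j,m}` with the indicator function of `(z, 1]`: the one-dimensional
factor which a point with coordinate `z` contributes to a Haar coefficient of the discrepancy. -/
def haarTail (j : ℤ) (m : ℕ) (z : ℝ) : ℝ :=
  ∫ x in Set.Icc (0 : ℝ) 1, (if z < x then 1 else 0) * haar1 j m x

/-- The inner product of `h_{j,m}` with the identity function: the one-dimensional factor which the
volume term contributes to a Haar coefficient of the discrepancy. -/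
def haarMoment (j : ℤ) (m : ℕ) : ℝ :=
  ∫ x in Set.Icc (0 : ℝ) 1, x * haar1 j m x

lemma haar1_neg_one (m : ℕ) :
    haar1 (-1) m = (Set.Ico (0 : ℝ) 1).indicator 1 := by
  ext x
  simp [haar1, Set.indicator_apply]

lemma haar1_natCast (J m : ℕ) :
    haar1 J m = (Set.Ico ((m : ℝ) / 2 ^ J) ((m + 1 / 2) / 2 ^ J)).indicator 1 -
      (Set.Ico (((m : ℝ) + 1 / 2) / 2 ^ J) ((m + 1) / 2 ^ J)).indicator 1 := by
  ext x
  have hJ : (J : ℤ) ≠ -1 := by lia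
  simp only [haar1, hJ, if_false, Int.toNat_natCast, Pi.sub_apply, Pi.one_apply,
    Set.indicator_apply, Set.mem_Ico]
  split_ifs <;> first | norm_num; done | linarith

lemma measurable_haar1 (j : ℤ) (m : ℕ) : Measurable (haar1 j m) := by
  unfold haar1
  refine Measurable.ite (.const _) ?_ ?_
  · exact Measurable.ite measurableSet_Ico measurable_const measurable_const
  · exact Measurable.ite measurableSet_Ico measurable_const
      (Measurable.ite measurableSet_Ico measurable_const measurable_const)

lemma abs_haar1_le_one (j : ℤ) (m : ℕ) (x : ℝ) : |haar1 j m x| ≤ 1 := by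
  unfold haar1
  split_ifs <;> norm_num

lemma integrableOn_mul_haar1 (j : ℤ) (m : ℕ) {f : ℝ → ℝ} {s : Set ℝ} (hf : IntegrableOn f s) :
    IntegrableOn (fun x => f x * haar1 j m x) s :=
  hf.mul_bdd (c := 1) (measurable_haar1 j m).aestronglyMeasurable
    (.of_forall fun x => abs_haar1_le_one j m x)

lemma intervalIntegrable_ite_lt (z a b : ℝ) :
    IntervalIntegrable (fun x => if z < x then (1 : ℝ) else 0) volume a b := by
  have h : Monotone fun x => if z < x then (1 : ℝ) else 0 := fun x y hxy => by
    dsimp only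
    split_ifs <;> first | norm_num; done | linarith
  exact h.intervalIntegrable

lemma integrableOn_ite_lt (z : ℝ) :
    IntegrableOn (fun x => if z < x then (1 : ℝ) else 0) (Set.Icc 0 1) :=
  (intervalIntegrable_iff_integrableOn_Icc_of_le zero_le_one).1 (intervalIntegrable_ite_lt z 0 1)

lemma integrableOn_id_Icc : IntegrableOn (fun x : ℝ => x) (Set.Icc 0 1) :=
  continuous_id.integrableOn_Icc

section Product

variable {d : ℕ}

lemma discSeq_eq_sum_prod (S : ℕ → Fin d → ℝ) (N : ℕ) (x : Fin d → ℝ) :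
    discSeq d S N x =
      (1 / N : ℝ) * ∑ k ∈ Finset.range N, ∏ i, (if S k i < x i then 1 else 0) - ∏ i, x i := by
  have h_card : (Nat.card {k : Fin N // ∀ i, S k i < x i} : ℝ) =
      ∑ k ∈ Finset.range N, ∏ i, (if S k i < x i then 1 else 0) := by
    simp only [Nat.card_eq_fintype_card, Fintype.card_subtype, Finset.card_filter, Finset.sum_range,
      Finset.prod_ite_zero, Finset.prod_const_one, Finset.mem_univ, true_imp_iff, Nat.cast_sum,
      Nat.cast_ite, Nat.cast_one, Nat.cast_zero]
  rw [discSeq, h_card, one_div_mul_eq_div]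

lemma restrict_unitCube :
    (volume : Measure (Fin d → ℝ)).restrict (unitCube d) =
      Measure.pi fun _ => (volume : Measure ℝ).restrict (Set.Icc 0 1) := by
  rw [unitCube, volume_pi, Measure.restrict_pi_pi]

lemma integrableOn_unitCube_prod {f : Fin d → ℝ → ℝ}
    (hf : ∀ i, IntegrableOn (f i) (Set.Icc 0 1)) :
    IntegrableOn (fun x => ∏ i, f i (x i)) (unitCube d) := by
  rw [IntegrableOn, restrict_unitCube]
  exact Integrable.fintype_prod hf

lemma integral_unitCube_prod (f : Fin d → ℝ → ℝ) :
    ∫ x in unitCube d, ∏ i, f i (x i) = ∏ i, ∫ x in Set.Icc (0 : ℝ) 1, f i x := by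
  rw [restrict_unitCube]
  exact integral_fintype_prod_eq_prod f

lemma haarCoeff_discSeq (S : ℕ → Fin d → ℝ) {N : ℕ} (hN : N ≠ 0) (j : Fin d → ℤ)
    (m : Fin d → ℕ) :
    haarCoeff d (discSeq d S N) j m =
      (1 / N : ℝ) * ∑ k ∈ Finset.range N,
        (∏ i, haarTail (j i) (m i) (S k i) - ∏ i, haarMoment (j i) (m i)) := by
  have h_split (x : Fin d → ℝ) : discSeq d S N x * haarFn d j m x =
      (1 / N : ℝ) * ∑ k ∈ Finset.range N,
          ∏ i, ((if S k i < x i then 1 else 0) * haar1 (j i) (m i) (x i)) -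
        ∏ i, (x i * haar1 (j i) (m i) (x i)) := by
    simp only [discSeq_eq_sum_prod, haarFn, Finset.prod_mul_distrib, ← Finset.sum_mul]
    ring
  have h_points (k : ℕ) : IntegrableOn
      (fun x => ∏ i, ((if S k i < x i then 1 else 0) * haar1 (j i) (m i) (x i))) (unitCube d) :=
    integrableOn_unitCube_prod (f := fun i x => (if S k i < x then 1 else 0) * haar1 (j i) (m i) x)
      fun i => integrableOn_mul_haar1 _ _ (integrableOn_ite_lt _)
  have h_volume : IntegrableOn (fun x => ∏ i, (x i * haar1 (j i) (m i) (x i))) (unitCube d) :=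
    integrableOn_unitCube_prod (f := fun i x => x * haar1 (j i) (m i) x)
      fun i => integrableOn_mul_haar1 _ _ integrableOn_id_Icc
  simp only [haarCoeff, h_split]
  rw [integral_sub ((integrable_finsetSum _ fun k _ => h_points k).const_mul _) h_volume,
    integral_const_mul, integral_finsetSum _ fun k _ => h_points k,
    integral_unitCube_prod fun i x => x * haar1 (j i) (m i) x,
    Finset.sum_congr rfl fun k _ => integral_unitCube_prod
      fun i x => (if S k i < x then 1 else 0) * haar1 (j i) (m i) x,
    Finset.sum_sub_distrib, Finset.sum_const, Finset.card_range, nsmul_eq_mul, mul_sub,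
    one_div, inv_mul_cancel_left₀ (Nat.cast_ne_zero.2 hN)]
  rfl

end Product

lemma integral_ite_lt (z : ℝ) {a b : ℝ} (hab : a ≤ b) :
    ∫ x in a..b, (if z < x then (1 : ℝ) else 0) = max b z - max a z := by
  have h_Ioc : Set.Ioc a b ∩ Set.Ioi z = Set.Ioc (max a z) b := by
    rw [Set.Ioc_inter_Ioi]
  have h_ind : (fun x => if z < x then (1 : ℝ) else 0) = (Set.Ioi z).indicator 1 := by
    ext x
    simp [Set.indicator_apply]
  rw [h_ind, intervalIntegral.integral_of_le hab, setIntegral_indicator measurableSet_Ioi, h_Ioc]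
  simp only [Pi.one_apply, setIntegral_const, Real.volume_real_Ioc, smul_eq_mul, mul_one]
  grind

lemma setIntegral_mul_indicator_Ico (f : ℝ → ℝ) {a b : ℝ} (ha : 0 ≤ a) (hab : a ≤ b) (hb : b ≤ 1) :
    ∫ x in Set.Icc (0 : ℝ) 1, f x * (Set.Ico a b).indicator 1 x = ∫ x in a..b, f x := by
  have h_subset : Set.Ico a b ⊆ Set.Icc 0 1 := fun x hx => ⟨ha.trans hx.1, hx.2.le.trans hb⟩
  have h_mul (x : ℝ) : f x * (Set.Ico a b).indicator 1 x = (Set.Ico a b).indicator f x := by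
    simp [Set.indicator_apply]
  simp only [h_mul]
  rw [setIntegral_indicator measurableSet_Ico, Set.inter_eq_self_of_subset_right h_subset,
    integral_Ico_eq_integral_Ioc, intervalIntegral.integral_of_le hab]

lemma setIntegral_mul_haar1_neg_one (f : ℝ → ℝ) (m : ℕ) :
    ∫ x in Set.Icc (0 : ℝ) 1, f x * haar1 (-1) m x = ∫ x in (0 : ℝ)..1, f x := by
  rw [haar1_neg_one, setIntegral_mul_indicator_Ico f le_rfl zero_le_one le_rfl]

lemma setIntegral_mul_haar1_natCast {f : ℝ → ℝ} (hf : IntegrableOn f (Set.Icc 0 1)) {J m : ℕ}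
    (hm : m < 2 ^ J) :
    ∫ x in Set.Icc (0 : ℝ) 1, f x * haar1 J m x =
      (∫ x in (m / 2 ^ J : ℝ)..(m + 1 / 2) / 2 ^ J, f x) -
        ∫ x in ((m + 1 / 2) / 2 ^ J : ℝ)..(m + 1) / 2 ^ J, f x := by
  have h_left : (m / 2 ^ J : ℝ) ≤ (m + 1 / 2) / 2 ^ J := by gcongr; norm_num
  have h_right : ((m + 1 / 2) / 2 ^ J : ℝ) ≤ (m + 1) / 2 ^ J := by gcongr; norm_num
  have h_le_one : ((m + 1) / 2 ^ J : ℝ) ≤ 1 :=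
    div_le_one_of_le₀ (by exact_mod_cast hm) (by positivity)
  have h_int (a b : ℝ) :
      IntegrableOn (fun x => f x * (Set.Ico a b).indicator 1 x) (Set.Icc 0 1) := by
    refine hf.mul_bdd (c := 1) (measurable_one.indicator measurableSet_Ico).aestronglyMeasurable
      (.of_forall fun x => ?_)
    simp only [Set.indicator_apply, Pi.one_apply]
    split_ifs <;> simp
  simp only [haar1_natCast, Pi.sub_apply, mul_sub]
  rw [integral_sub (h_int _ _) (h_int _ _),
    setIntegral_mul_indicator_Ico f (by positivity) h_left (h_right.trans h_le_one),
    setIntegral_mul_indicator_Ico f (by positivity) h_right h_le_one]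

lemma haarMoment_neg_one (m : ℕ) : haarMoment (-1) m = 1 / 2 := by
  rw [haarMoment, setIntegral_mul_haar1_neg_one, integral_id]
  norm_num

lemma haarMoment_natCast {J m : ℕ} (hm : m < 2 ^ J) :
    haarMoment J m = -(1 / 4) / (2 ^ J * 2 ^ J) := by
  rw [haarMoment, setIntegral_mul_haar1_natCast integrableOn_id_Icc hm, integral_id, integral_id]
  field_simp
  ring

lemma haarTail_neg_one (m : ℕ) {z : ℝ} (hz : z ∈ Set.Icc 0 1) : haarTail (-1) m z = 1 - z := by
  rw [haarTail, setIntegral_mul_haar1_neg_one, integral_ite_lt z zero_le_one, max_eq_left hz.2,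
    max_eq_right hz.1]

lemma haarTail_natCast {J m : ℕ} (hm : m < 2 ^ J) (z : ℝ) :
    haarTail J m z = -max 0 (1 / 2 - |2 ^ J * z - m - 1 / 2|) / 2 ^ J := by
  have h_scale (a : ℝ) : max (a / 2 ^ J) z = max a (2 ^ J * z) / 2 ^ J := by
    rw [← max_div_div_right (by positivity), mul_div_cancel_left₀ z (by positivity)]
  rw [haarTail, setIntegral_mul_haar1_natCast (integrableOn_ite_lt z) hm,
    integral_ite_lt z (by gcongr; norm_num), integral_ite_lt z (by gcongr; norm_num)]
  simp only [h_scale, ← sub_div]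
  congr 1
  grind

/-! ### Walsh expansion of the primitives of the Haar functions -/

/-- The real number in `[0, 1]` with binary digits `y 0, y 1, …` after the point. -/
def digitValue (y : ℕ → ZMod 2) : ℝ := ∑' i, ((y i).val : ℝ) / 2 ^ (i + 1)

/-- The integer whose `J` binary digits are `y 0, …, y (J - 1)`, most significant digit first: the
number `m` of the dyadic interval `I_{J,m}` selected by the digits `y`. -/
def digitPrefix : ℕ → (ℕ → ZMod 2) → ℕ
  | 0, _ => 0
  | J + 1, y => 2 * digitPrefix J y + (y J).val

/-- The nontrivial character of `𝔽₂`. -/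
def digitSign (x : ZMod 2) : ℝ := (-1) ^ x.val

lemma digitSign_add (x y : ZMod 2) : digitSign (x + y) = digitSign x * digitSign y := by
  rw [digitSign, digitSign, digitSign, ← pow_add, ZMod.val_add, ← neg_one_pow_eq_pow_mod_two]

lemma abs_digitSign (x : ZMod 2) : |digitSign x| = 1 := abs_neg_one_pow _

lemma digitSign_zero : digitSign 0 = 1 := pow_zero _

lemma digitSign_one : digitSign 1 = -1 := pow_one _

lemma digitSign_eq_sub_val (x : ZMod 2) : digitSign x = 1 - 2 * x.val := by
  fin_cases x
  · exact digitSign_zero.trans (by norm_num [ZMod.val])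
  · exact digitSign_one.trans (by norm_num [ZMod.val])

lemma digit_val_le_one (x : ZMod 2) : x.val ≤ 1 := Nat.le_of_lt_succ x.val_lt

lemma hasSum_one_div_two_pow_succ : HasSum (fun i : ℕ => (1 : ℝ) / 2 ^ (i + 1)) 1 := by
  have h := hasSum_geometric_two.mul_left (1 / 2)
  rw [one_div_mul_cancel two_ne_zero] at h
  exact h.congr_fun fun i => by rw [one_div_pow, one_div_mul_one_div, ← pow_succ']

lemma summable_digitValue (y : ℕ → ZMod 2) :
    Summable fun i => ((y i).val : ℝ) / 2 ^ (i + 1) := by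
  refine .of_nonneg_of_le (fun i => by positivity) (fun i => ?_)
    hasSum_one_div_two_pow_succ.summable
  gcongr
  exact_mod_cast digit_val_le_one (y i)

lemma digitValue_mem_Icc (y : ℕ → ZMod 2) : digitValue y ∈ Set.Icc 0 1 := by
  refine ⟨tsum_nonneg fun i => by positivity, ?_⟩
  refine ((summable_digitValue y).tsum_le_tsum (fun i => ?_)
    hasSum_one_div_two_pow_succ.summable).trans_eq hasSum_one_div_two_pow_succ.tsum_eq
  gcongr
  exact_mod_cast digit_val_le_one (y i)

lemma digitValue_eq_head_add_tail (y : ℕ → ZMod 2) :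
    digitValue y = ((y 0).val + digitValue fun i => y (i + 1)) / 2 := by
  rw [digitValue, (summable_digitValue y).tsum_eq_zero_add, digitValue, add_div, ← tsum_div_const]
  simp only [pow_succ, pow_zero, one_mul, div_div]

lemma two_pow_mul_digitValue (J : ℕ) (y : ℕ → ZMod 2) :
    2 ^ J * digitValue y = digitPrefix J y + digitValue fun i => y (J + i) := by
  induction J with
  | zero => simp [digitPrefix]
  | succ J ih =>
    rw [pow_succ', mul_assoc, ih, digitPrefix, digitValue_eq_head_add_tail fun i => y (J + i)]
    push_cast
    simp only [add_zero, add_assoc, add_comm 1]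
    ring

lemma digitPrefix_lt (J : ℕ) (y : ℕ → ZMod 2) : digitPrefix J y < 2 ^ J := by
  induction J with
  | zero => simp [digitPrefix]
  | succ J ih =>
    have := digit_val_le_one (y J)
    rw [digitPrefix, pow_succ]
    lia

lemma digitPrefix_eq_digitPrefix_iff {J : ℕ} {y w : ℕ → ZMod 2} :
    digitPrefix J y = digitPrefix J w ↔ ∀ i < J, y i = w i := by
  induction J with
  | zero => simp [digitPrefix]
  | succ J ih =>
    have hy := digit_val_le_one (y J)
    have hw := digit_val_le_one (w J)
    rw [Nat.forall_lt_succ_right, ← ih, ← (ZMod.val_injective 2).eq_iff, digitPrefix, digitPrefix]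
    lia

lemma exists_digitPrefix_eq {J m : ℕ} (hm : m < 2 ^ J) : ∃ y, digitPrefix J y = m := by
  induction J generalizing m with
  | zero => exact ⟨0, by simp_all [digitPrefix]⟩
  | succ J ih =>
    obtain ⟨y, hy⟩ := ih (m := m / 2) (by rw [pow_succ] at hm; lia)
    refine ⟨Function.update y J m, ?_⟩
    have h_prefix : digitPrefix J (Function.update y J m) = digitPrefix J y :=
      digitPrefix_eq_digitPrefix_iff.2 fun i hi => Function.update_of_ne hi.ne _ _
    rw [digitPrefix, h_prefix, hy, Function.update_self, ZMod.val_natCast]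
    lia

lemma hasSum_digitSign (y : ℕ → ZMod 2) :
    HasSum (fun i => digitSign (y i) / 2 ^ (i + 2)) (1 / 2 - digitValue y) := by
  refine ((hasSum_one_div_two_pow_succ.div_const 2).sub
    (summable_digitValue y).hasSum).congr_fun fun i => ?_
  rw [digitSign_eq_sub_val]
  field_simp
  ring

/-- The functions of the binary digits in which `haarTail j m` is expanded on `I_{j,m}`; up to the
normalization, the Walsh functions that occur in the Walsh series of the primitive of `h_{j,m}`. -/
def haarWalsh : ℤ → ℕ → (ℕ → ZMod 2) → ℝ
  | _, 0, _ => 1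
  | .ofNat J, l + 1, y => digitSign (y J) * digitSign (y (J + 1 + l))
  | .negSucc _, l + 1, y => digitSign (y l)

/-- The coefficient of `haarWalsh j l` in the expansion of `haarTail j m`. -/
def haarWalshCoeff : ℤ → ℕ → ℝ
  | .ofNat J, 0 => -(1 / 4) / 2 ^ J
  | .ofNat J, l + 1 => 1 / 2 ^ (l + 3) / 2 ^ J
  | .negSucc _, l => 1 / 2 ^ (l + 1)

lemma haarWalsh_zero (j : ℤ) (y : ℕ → ZMod 2) : haarWalsh j 0 y = 1 := by
  cases j <;> rfl

lemma haarWalsh_add (j : ℤ) (l : ℕ) (y w : ℕ → ZMod 2) :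
    haarWalsh j l (y + w) = haarWalsh j l y * haarWalsh j l w := by
  cases j <;> cases l <;> simp only [haarWalsh, Pi.add_apply, digitSign_add, mul_one]
  ring

lemma abs_haarWalsh (j : ℤ) (l : ℕ) (y : ℕ → ZMod 2) : |haarWalsh j l y| = 1 := by
  cases j <;> cases l <;> simp only [haarWalsh, abs_mul, abs_digitSign, abs_one, mul_one]

lemma abs_haarWalshCoeff_le (j : ℤ) (l : ℕ) : |haarWalshCoeff j l| ≤ 1 / 2 ^ (j.toNat + l) := by
  have h_pow (a b : ℕ) (h : a ≤ b) : (1 : ℝ) / 2 ^ b ≤ 1 / 2 ^ a :=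
    one_div_pow_le_one_div_pow_of_le one_le_two h
  rcases j with J | _
  · rcases l with _ | l
    · rw [haarWalshCoeff, neg_div, abs_neg, abs_of_nonneg (by positivity)]
      exact (by rw [pow_add]; ring : (1 : ℝ) / 4 / 2 ^ J = 1 / 2 ^ (J + 2)).trans_le
        (h_pow J (J + 2) (by lia))
    · rw [haarWalshCoeff, abs_of_nonneg (by positivity), div_div, ← pow_add]
      exact h_pow _ _ (by simp; lia)
  · rw [haarWalshCoeff, abs_of_nonneg (by positivity)]
    exact h_pow _ _ (by simp)

lemma eq_neg_one_or_eq_natCast {j : ℤ} (hj : -1 ≤ j) : j = -1 ∨ ∃ J : ℕ, j = J := by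
  rcases j with J | J
  · exact .inr ⟨J, rfl⟩
  · left; lia

lemma haarMoment_eq_haarWalshCoeff {j : ℤ} (hj : -1 ≤ j) {m : ℕ} (hm : m < 2 ^ j.toNat) :
    haarMoment j m = haarWalshCoeff j 0 / 2 ^ j.toNat := by
  obtain rfl | ⟨J, rfl⟩ := eq_neg_one_or_eq_natCast hj
  · rw [haarMoment_neg_one]
    change _ = 1 / 2 ^ (0 + 1) / 2 ^ 0
    norm_num
  · rw [Int.toNat_natCast] at hm ⊢
    rw [haarMoment_natCast hm, ← div_div]
    rfl

lemma hat_digitValue (y : ℕ → ZMod 2) :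
    1 / 2 - |digitValue y - 1 / 2| =
      1 / 4 - digitSign (y 0) * (1 / 2 - digitValue fun i => y (i + 1)) / 2 := by
  obtain ⟨h0, h1⟩ := digitValue_mem_Icc fun i => y (i + 1)
  rw [digitValue_eq_head_add_tail, digitSign_eq_sub_val]
  rcases Nat.le_one_iff_eq_zero_or_eq_one.1 (digit_val_le_one (y 0)) with h | h <;>
    · rw [h]
      push_cast
      grind

lemma haarTail_natCast_of_digitPrefix_eq {J m : ℕ} {y : ℕ → ZMod 2} (h : digitPrefix J y = m) :
    haarTail J m (digitValue y) =
      -(1 / 4) / 2 ^ J +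
        digitSign (y J) * (1 / 2 - digitValue fun i => y (J + 1 + i)) / 2 / 2 ^ J := by
  have h_nonneg : 0 ≤ 1 / 2 - |digitValue (fun i => y (J + i)) - 1 / 2| := by
    have := digitValue_mem_Icc fun i => y (J + i)
    grind
  rw [haarTail_natCast (h ▸ digitPrefix_lt J y), two_pow_mul_digitValue, h, add_sub_cancel_left,
    max_eq_right h_nonneg, hat_digitValue]
  simp only [add_zero, add_assoc, add_comm 1]
  ring

lemma haarTail_natCast_of_digitPrefix_ne {J m : ℕ} (hm : m < 2 ^ J) {y : ℕ → ZMod 2}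
    (h : digitPrefix J y ≠ m) : haarTail J m (digitValue y) = 0 := by
  have h_nonpos : 1 / 2 - |digitPrefix J y + digitValue (fun i => y (J + i)) - m - 1 / 2| ≤ 0 := by
    obtain ⟨h0, h1⟩ := digitValue_mem_Icc fun i => y (J + i)
    rcases h.lt_or_gt with h | h <;>
      · have : (_ : ℝ) ≤ _ := Nat.cast_le.2 (Nat.succ_le_of_lt h)
        push_cast at this
        grind
  rw [haarTail_natCast hm, two_pow_mul_digitValue, max_eq_left h_nonpos, neg_zero, zero_div]

lemma hasSum_haarTail_of_digitPrefix_eq {j : ℤ} (hj : -1 ≤ j) {m : ℕ} {y : ℕ → ZMod 2}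
    (h : digitPrefix j.toNat y = m) :
    HasSum (fun l : ℕ => haarWalshCoeff j l * haarWalsh j l y) (haarTail j m (digitValue y)) := by
  obtain rfl | ⟨J, rfl⟩ := eq_neg_one_or_eq_natCast hj
  · have h_sum : HasSum (fun l => haarWalshCoeff (-1) (l + 1) * haarWalsh (-1) (l + 1) y)
        (1 / 2 - digitValue y) :=
      (hasSum_digitSign y).congr_fun fun l => one_div_mul_eq_div _ _
    have h_zero : haarWalshCoeff (-1) 0 = 1 / 2 := congrArg (1 / ·) (pow_one 2)
    rwa [← hasSum_nat_add_iff' 1, haarTail_neg_one m (digitValue_mem_Icc y), Finset.sum_range_one,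
      haarWalsh_zero, mul_one, h_zero, sub_right_comm, sub_half]
  · have h_sum : HasSum (fun l => haarWalshCoeff J (l + 1) * haarWalsh J (l + 1) y)
        (digitSign (y J) * (1 / 2 - digitValue fun i => y (J + 1 + i)) / 2 / 2 ^ J) := by
      refine ((((hasSum_digitSign fun i => y (J + 1 + i)).mul_left
        (digitSign (y J))).div_const 2).div_const (2 ^ J)).congr_fun fun l => ?_
      change 1 / 2 ^ (l + 3) / 2 ^ J * (digitSign (y J) * digitSign (y (J + 1 + l))) = _
      ring
    have h_zero : haarWalshCoeff J 0 = -(1 / 4) / 2 ^ J := rfl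
    rw [Int.toNat_natCast] at h
    rwa [← hasSum_nat_add_iff' 1, haarTail_natCast_of_digitPrefix_eq h, Finset.sum_range_one,
      haarWalsh_zero, mul_one, h_zero, add_sub_cancel_left]

lemma hasSum_haarTail {j : ℤ} (hj : -1 ≤ j) {m : ℕ} (hm : m < 2 ^ j.toNat) (y : ℕ → ZMod 2) :
    HasSum (fun l => haarWalshCoeff j l * if digitPrefix j.toNat y = m then haarWalsh j l y else 0)
      (haarTail j m (digitValue y)) := by
  by_cases h : digitPrefix j.toNat y = m
  · simpa only [h, if_true] using hasSum_haarTail_of_digitPrefix_eq hj h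
  · obtain rfl | ⟨J, rfl⟩ := eq_neg_one_or_eq_natCast hj
    · exact absurd (by simp_all [digitPrefix]) h
    · rw [Int.toNat_natCast] at h hm ⊢
      rw [haarTail_natCast_of_digitPrefix_ne hm h]
      simpa only [h, if_false, mul_zero] using hasSum_zero

/-! ### Digital shifts of dyadic blocks -/

/-- A block `B` of `2 ^ n` points of `[0,1)^d`, given by their binary digits `y`, is a *shift net*
of quality `t` if translations of the digits preserving the block act with prescribed effect on all
digits up to position `a i` and on the digit at position `b i`, as long as the total cost
`∑ i, (a i + b i)` is at most `2 * n - t`. This is the only property of a block of an order `2`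
digital sequence that enters the estimates. Positions count from `1`, so `b i = 0` prescribes
nothing. -/
structure IsShiftNet {κ : Type*} {d : ℕ} (t n : ℕ) (B : Finset κ)
    (y : κ → Fin d → ℕ → ZMod 2) : Prop where
  card_eq : B.card = 2 ^ n
  exists_shift (a b : Fin d → ℕ) (w : Fin d → ℕ → ZMod 2) (h_le : a ≤ b)
    (h_cost : ∑ i, (a i + b i) + t ≤ 2 * n) :
    ∃ (σ : Equiv.Perm κ) (v : Fin d → ℕ → ZMod 2), (∀ k, σ k ∈ B ↔ k ∈ B) ∧
      (∀ k, y (σ k) = y k + v) ∧ ∀ i row, row < a i ∨ row + 1 = b i → v i row = w i row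

/-- The binary digits of `digitalCoord C k`. -/
def digitVec (C : ℕ → ℕ → ZMod 2) (k i : ℕ) : ZMod 2 :=
  ∑ ℓ ∈ Finset.range (k + 1), C i ℓ * (if k.testBit ℓ then 1 else 0)

/-- The `a`-th dyadic block of length `2 ^ n` of indices of a sequence. -/
def dyadicBlock (n a : ℕ) : Finset ℕ := Finset.Ico (a * 2 ^ n) ((a + 1) * 2 ^ n)

lemma mem_dyadicBlock {n a k : ℕ} : k ∈ dyadicBlock n a ↔ k / 2 ^ n = a := by
  rw [dyadicBlock, Finset.mem_Ico, Nat.div_eq_iff (by positivity), add_one_mul]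
  have := Nat.one_le_two_pow (n := n)
  lia

lemma card_dyadicBlock (n a : ℕ) : (dyadicBlock n a).card = 2 ^ n := by
  rw [dyadicBlock, Nat.card_Ico, add_one_mul, Nat.add_sub_cancel_left]

lemma xor_mem_dyadicBlock_iff {n a s k : ℕ} (hs : s < 2 ^ n) :
    k ^^^ s ∈ dyadicBlock n a ↔ k ∈ dyadicBlock n a := by
  rw [mem_dyadicBlock, mem_dyadicBlock, Nat.xor_div_two_pow, Nat.div_eq_of_lt hs, Nat.xor_zero]

lemma digitalCoord_eq_digitValue (C : ℕ → ℕ → ZMod 2) (k : ℕ) :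
    digitalCoord C k = digitValue (digitVec C k) := rfl

lemma digitVec_eq_sum_range (C : ℕ → ℕ → ZMod 2) {k L : ℕ} (hk : k < 2 ^ L) (i : ℕ) :
    digitVec C k i = ∑ ℓ ∈ Finset.range L, C i ℓ * (if k.testBit ℓ then 1 else 0) := by
  have h_zero (ℓ : ℕ) (hℓ : ℓ ≥ k.size) : C i ℓ * (if k.testBit ℓ then 1 else 0) = 0 := by
    rw [Nat.testBit_lt_two_pow (Nat.size_le.1 hℓ)]
    exact mul_zero _
  rw [digitVec, Finset.eventually_constant_sum h_zero (Nat.size_le.2 hk),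
    Finset.eventually_constant_sum h_zero
      (Nat.size_le.2 (k.lt_succ_self.trans Nat.lt_two_pow_self))]

lemma digitVec_xor (C : ℕ → ℕ → ZMod 2) (k s : ℕ) :
    digitVec C (k ^^^ s) = digitVec C k + digitVec C s := by
  have hk : k < 2 ^ max k s := (le_max_left k s).trans_lt Nat.lt_two_pow_self
  have hs : s < 2 ^ max k s := (le_max_right k s).trans_lt Nat.lt_two_pow_self
  ext i
  rw [Pi.add_apply, digitVec_eq_sum_range C (Nat.xor_lt_two_pow hk hs), digitVec_eq_sum_range C hk,
    digitVec_eq_sum_range C hs, ← Finset.sum_add_distrib]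
  refine Finset.sum_congr rfl fun ℓ _ => ?_
  rw [Nat.testBit_xor, ← mul_add]
  congr 1
  cases k.testBit ℓ <;> cases s.testBit ℓ <;> rfl

lemma exists_forall_dotProduct_eq_of_linearIndependent {K ι n : Type*} [Field K] [Fintype n]
    {v : ι → n → K} (hv : LinearIndependent K v) (b : ι → K) :
    ∃ x : n → K, ∀ i, v i ⬝ᵥ x = b i := by
  classical
  obtain ⟨g, hg⟩ := (Finsupp.linearCombination K v).exists_leftInverse_of_injective
    (LinearMap.ker_eq_bot.2 hv)
  refine ⟨(dotProductEquiv K n).symm (Finsupp.linearCombination K b ∘ₗ g), fun i => ?_⟩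
  have h_gv : g (v i) = Finsupp.single i 1 := by
    simpa using LinearMap.congr_fun hg (Finsupp.single i 1)
  rw [dotProduct_comm, ← dotProductEquiv_apply_apply, LinearEquiv.apply_symm_apply,
    LinearMap.comp_apply, h_gv, Finsupp.linearCombination_single, one_smul]

lemma exists_testBit_eq {n : ℕ} (x : Fin n → ZMod 2) :
    ∃ s < 2 ^ n, ∀ ℓ : Fin n, (if s.testBit ℓ then 1 else 0) = x ℓ := by
  refine ⟨Nat.ofBits fun ℓ => decide (x ℓ = 1), Nat.ofBits_lt_two_pow _, fun ℓ => ?_⟩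
  rw [Nat.testBit_ofBits_lt _ _ ℓ.2]
  generalize x ℓ = b
  revert b
  decide

lemma exists_digitVec_eq {n : ℕ} {ι : Type*} {C : ι → ℕ → ℕ → ZMod 2} {r : ι → ℕ}
    (h : LinearIndependent (ZMod 2) fun p => fun col : Fin n => C p (r p) col) (b : ι → ZMod 2) :
    ∃ s < 2 ^ n, ∀ p, digitVec (C p) s (r p) = b p := by
  obtain ⟨x, hx⟩ := exists_forall_dotProduct_eq_of_linearIndependent h b
  obtain ⟨s, hs, hsx⟩ := exists_testBit_eq x
  refine ⟨s, hs, fun p => ?_⟩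
  rw [digitVec_eq_sum_range _ hs, Finset.sum_range, ← hx p]
  simp only [hsx, dotProduct]

/-- The rows below `a` together with the row `b - 1`, in decreasing order. -/
def shiftRow (a b : ℕ) (l : Fin (min (a + 1) b)) : ℕ :=
  if (l : ℕ) = 0 then b - 1 else min (a + 1) b - 1 - l

lemma strictAnti_shiftRow (a b : ℕ) : StrictAnti (shiftRow a b) := by
  intro l l' (h : (l : ℕ) < l')
  have := l'.2
  unfold shiftRow
  grind

lemma shiftRow_lt (a b : ℕ) (l : Fin (min (a + 1) b)) : shiftRow a b l < b := by
  have := l.2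
  unfold shiftRow
  grind

lemma exists_shiftRow_eq {a b row : ℕ} (hab : a ≤ b) (h : row < a ∨ row + 1 = b) :
    ∃ l, shiftRow a b l = row := by
  by_cases hb : row + 1 = b
  · exact ⟨⟨0, by lia⟩, by simp [shiftRow, ← hb]⟩
  · refine ⟨⟨min (a + 1) b - 1 - row, by lia⟩, ?_⟩
    simp only [shiftRow]
    grind

lemma sum_two_shiftRow_le {a b : ℕ} (hab : a ≤ b) :
    ∑ l : Fin (min (a + 1) b) with l.1 < 2, (shiftRow a b l + 1) ≤ a + b := by
  unfold shiftRow
  generalize hν : min (a + 1) b = ν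
  match ν with
  | 0 => exact Nat.zero_le _
  | 1 =>
    rw [Finset.sum_filter, Fin.sum_univ_one]
    grind
  | ν + 2 =>
    have h_zero (l : Fin ν) : ¬ (l.succ.succ : ℕ) < 2 := by
      simp only [Fin.val_succ]
      lia
    rw [Finset.sum_filter, Fin.sum_univ_succ, Fin.sum_univ_succ,
      Finset.sum_eq_zero fun l _ => if_neg (h_zero l)]
    grind

lemma exists_digitVec_eq_of_isOrderSeq {d t n : ℕ} {E : Fin d → ℕ → ℕ → ZMod 2}
    (hE : IsOrderSeq 2 t d E) (ht : t < 2 * n) {a b : Fin d → ℕ} (w : Fin d → ℕ → ZMod 2)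
    (h_le : a ≤ b) (h_cost : ∑ i, (a i + b i) + t ≤ 2 * n) :
    ∃ s < 2 ^ n, ∀ i row, row < a i ∨ row + 1 = b i → digitVec (E i) s row = w i row := by
  have h_single (i : Fin d) : a i + b i ≤ ∑ i, (a i + b i) :=
    Finset.single_le_sum (f := fun i => a i + b i) (fun _ _ => Nat.zero_le _) (Finset.mem_univ i)
  have h_indep := hE n ht (fun i => min (a i + 1) (b i)) (fun i => shiftRow (a i) (b i))
    (fun i => strictAnti_shiftRow _ _)
    (fun i l => (shiftRow_lt _ _ l).trans_le (by have := h_single i; lia))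
    ((Finset.sum_le_sum fun i _ => sum_two_shiftRow_le (h_le i)).trans (by lia))
  obtain ⟨s, hs, hsw⟩ := exists_digitVec_eq h_indep fun p => w p.1 (shiftRow _ _ p.2)
  refine ⟨s, hs, fun i row h_row => ?_⟩
  obtain ⟨l, rfl⟩ := exists_shiftRow_eq (h_le i) h_row
  exact hsw ⟨i, l⟩

theorem isShiftNet_dyadicBlock {d t : ℕ} {E : Fin d → ℕ → ℕ → ZMod 2} (hE : IsOrderSeq 2 t d E)
    (n a : ℕ) : IsShiftNet t n (dyadicBlock n a) fun k i => digitVec (E i) k where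
  card_eq := card_dyadicBlock n a
  exists_shift a b w h_le h_cost := by
    obtain ⟨s, hs, hsw⟩ : ∃ s < 2 ^ n,
        ∀ i row, row < a i ∨ row + 1 = b i → digitVec (E i) s row = w i row := by
      by_cases ht : t < 2 * n
      · exact exists_digitVec_eq_of_isOrderSeq hE ht w h_le h_cost
      · refine ⟨0, by positivity, fun i row h_row => ?_⟩
        have h_single : a i + b i ≤ ∑ i, (a i + b i) :=
          Finset.single_le_sum (f := fun i => a i + b i) (fun _ _ => Nat.zero_le _)
            (Finset.mem_univ i)
        lia
    refine ⟨Function.Involutive.toPerm (· ^^^ s) fun k => Nat.xor_xor_cancel_right _ _,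
      fun i => digitVec (E i) s, fun k => xor_mem_dyadicBlock_iff hs, fun k => ?_, hsw⟩
    ext1 i
    exact digitVec_xor _ _ _

/-! ### Points in dyadic boxes and Walsh sums -/

section Counting

variable {κ : Type*} {d t n : ℕ} {B : Finset κ} {y : κ → Fin d → ℕ → ZMod 2}

/-- The points of the block `B` that lie in the dyadic box `∏ i, I_{J i, m i}`. -/
def boxPoints (B : Finset κ) (y : κ → Fin d → ℕ → ZMod 2) (J m : Fin d → ℕ) : Finset κ :=
  B.filter fun k => ∀ i, digitPrefix (J i) (y k i) = m i

/-- The index set of the dyadic boxes with side lengths `2 ^ (-J i)`. -/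
def boxIndices (J : Fin d → ℕ) : Finset (Fin d → ℕ) :=
  Fintype.piFinset fun i => Finset.range (2 ^ J i)

lemma mem_boxIndices {J m : Fin d → ℕ} : m ∈ boxIndices J ↔ ∀ i, m i < 2 ^ J i := by
  simp only [boxIndices, Fintype.mem_piFinset, Finset.mem_range]

lemma card_boxIndices (J : Fin d → ℕ) : (boxIndices J).card = 2 ^ ∑ i, J i := by
  simp only [boxIndices, Fintype.card_piFinset, Finset.card_range, Finset.prod_pow_eq_pow_sum]

lemma sum_card_boxPoints (B : Finset κ) (y : κ → Fin d → ℕ → ZMod 2) (J : Fin d → ℕ) :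
    ∑ m ∈ boxIndices J, (boxPoints B y J m).card = B.card := by
  rw [Finset.card_eq_sum_card_fiberwise (f := fun k i => digitPrefix (J i) (y k i))
    (t := boxIndices J) fun k _ => mem_boxIndices.2 fun i => digitPrefix_lt _ _]
  simp only [boxPoints, funext_iff]

lemma exists_digits_of_mem_boxIndices {J m : Fin d → ℕ} (hm : m ∈ boxIndices J) :
    ∃ u : Fin d → ℕ → ZMod 2, ∀ i, digitPrefix (J i) (u i) = m i := by
  choose u hu using fun i => exists_digitPrefix_eq (mem_boxIndices.1 hm i)
  exact ⟨u, hu⟩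

lemma card_boxPoints_le_of_shift (hy : IsShiftNet t n B y) {J m m' : Fin d → ℕ}
    (hJ : 2 * ∑ i, J i + t ≤ 2 * n) (hm : m ∈ boxIndices J) (hm' : m' ∈ boxIndices J) :
    (boxPoints B y J m).card ≤ (boxPoints B y J m').card := by
  obtain ⟨u, hu⟩ := exists_digits_of_mem_boxIndices hm
  obtain ⟨u', hu'⟩ := exists_digits_of_mem_boxIndices hm'
  obtain ⟨σ, v, hσB, hσ, hv⟩ := hy.exists_shift J J (u' - u) le_rfl
    (by rwa [Finset.sum_add_distrib, ← two_mul])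
  refine Finset.card_le_card_of_injOn σ (fun k hk => ?_) σ.injective.injOn
  obtain ⟨hkB, hk⟩ := Finset.mem_filter.1 hk
  refine Finset.mem_filter.2 ⟨(hσB k).2 hkB, fun i => ?_⟩
  rw [← hu' i, digitPrefix_eq_digitPrefix_iff]
  intro row h_row
  have h_digit := digitPrefix_eq_digitPrefix_iff.1 ((hk i).trans (hu i).symm) row h_row
  rw [hσ, Pi.add_apply, Pi.add_apply, h_digit, hv i row (.inl h_row)]
  exact add_sub_cancel _ _

lemma card_boxPoints_mul (hy : IsShiftNet t n B y) {J m : Fin d → ℕ}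
    (hJ : 2 * ∑ i, J i + t ≤ 2 * n) (hm : m ∈ boxIndices J) :
    (boxPoints B y J m).card * 2 ^ ∑ i, J i = 2 ^ n := by
  rw [← hy.card_eq, ← sum_card_boxPoints B y J, Finset.sum_congr rfl fun m' hm' =>
    (card_boxPoints_le_of_shift hy hJ hm' hm).antisymm (card_boxPoints_le_of_shift hy hJ hm hm'),
    Finset.sum_const, card_boxIndices, smul_eq_mul, mul_comm]

lemma exists_le_sum_eq (J : Fin d → ℕ) {s : ℕ} (hs : s ≤ ∑ i, J i) :
    ∃ J' ≤ J, ∑ i, J' i = s := by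
  induction s with
  | zero => exact ⟨0, fun i => Nat.zero_le _, by simp⟩
  | succ s ih =>
    obtain ⟨J', h_le, h_sum⟩ := ih (by lia)
    obtain ⟨i, -, hi⟩ := Finset.exists_lt_of_sum_lt (h_sum.trans_lt hs)
    refine ⟨J' + Pi.single i 1, fun i' => ?_, ?_⟩
    · rcases eq_or_ne i' i with rfl | h
      · simpa using hi
      · simpa [h] using h_le i'
    · simp [Finset.sum_add_distrib, h_sum]

lemma exists_boxPoints_subset {J J' m : Fin d → ℕ} (h_le : J' ≤ J) (hm : m ∈ boxIndices J)
    (B : Finset κ) (y : κ → Fin d → ℕ → ZMod 2) :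
    ∃ m' ∈ boxIndices J', boxPoints B y J m ⊆ boxPoints B y J' m' := by
  obtain ⟨u, hu⟩ := exists_digits_of_mem_boxIndices hm
  refine ⟨fun i => digitPrefix (J' i) (u i), mem_boxIndices.2 fun i => digitPrefix_lt _ _,
    Finset.monotone_filter_right B fun k _ hk i => digitPrefix_eq_digitPrefix_iff.2 fun row h_row =>
      digitPrefix_eq_digitPrefix_iff.1 ((hk i).trans (hu i).symm) row (h_row.trans_le (h_le i))⟩

lemma card_boxPoints_le (hy : IsShiftNet t n B y) {J m : Fin d → ℕ}
    (hJ : 2 * n ≤ 2 * ∑ i, J i + t) (hm : m ∈ boxIndices J) :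
    (boxPoints B y J m).card ≤ 2 ^ ((t + 1) / 2) := by
  by_cases ht : t ≤ 2 * n
  · obtain ⟨J', h_le, h_sum⟩ := exists_le_sum_eq J (s := n - (t + 1) / 2) (by lia)
    obtain ⟨m', hm', h_subset⟩ := exists_boxPoints_subset h_le hm B y
    refine (Finset.card_le_card h_subset).trans_eq ?_
    have h_mul := card_boxPoints_mul hy (by lia) hm'
    refine Nat.eq_of_mul_eq_mul_right (Nat.two_pow_pos (∑ i, J' i)) ?_
    rw [h_mul, ← pow_add, h_sum]
    congr 1
    lia
  · calc (boxPoints B y J m).card ≤ B.card := Finset.card_filter_le _ _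
      _ = 2 ^ n := hy.card_eq
      _ ≤ 2 ^ ((t + 1) / 2) := Nat.pow_le_pow_right two_pos (by lia)

end Counting

section WalshSum

/-- The rows of the digits, in the format of `IsShiftNet.exists_shift`, on which the function
`haarWalsh j l` on a dyadic interval `I_{j,m}` depends. -/
def walshRows : ℤ → ℕ → ℕ × ℕ
  | j, 0 => (j.toNat, j.toNat)
  | .ofNat J, l + 1 => (J + 1, J + l + 2)
  | .negSucc _, l + 1 => (0, l + 1)

lemma walshRows_fst_le_snd (j : ℤ) (l : ℕ) : (walshRows j l).1 ≤ (walshRows j l).2 := by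
  cases j <;> cases l <;> simp [walshRows]; lia

lemma walshRows_fst_add_snd_le (j : ℤ) (l : ℕ) :
    (walshRows j l).1 + (walshRows j l).2 ≤ 2 * j.toNat + l + 2 := by
  cases j <;> cases l <;> simp [walshRows] <;> lia

lemma toNat_le_walshRows_fst (j : ℤ) (l : ℕ) : j.toNat ≤ (walshRows j l).1 := by
  cases j <;> cases l <;> simp [walshRows]

lemma walshRows_fst_lt_snd (j : ℤ) {l : ℕ} (hl : l ≠ 0) :
    (walshRows j l).1 < (walshRows j l).2 := by
  cases j <;> cases l <;> simp [walshRows] at hl ⊢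

lemma haarWalsh_congr {j : ℤ} {l : ℕ} {v w : ℕ → ZMod 2}
    (h : ∀ row, row < (walshRows j l).1 ∨ row + 1 = (walshRows j l).2 → v row = w row) :
    haarWalsh j l v = haarWalsh j l w := by
  rcases j with J | _ <;> rcases l with _ | l
  · rfl
  · change digitSign (v J) * digitSign (v (J + 1 + l)) = digitSign (w J) * digitSign (w (J + 1 + l))
    rw [h J (.inl J.lt_succ_self), h (J + 1 + l) (.inr (by simp only [walshRows]; lia))]
  · rfl
  · exact congrArg digitSign (h l (.inr rfl))

lemma haarWalsh_zero_right (j : ℤ) (l : ℕ) : haarWalsh j l 0 = 1 := by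
  cases j <;> cases l <;> simp only [haarWalsh, Pi.zero_apply, digitSign_zero, mul_one]

lemma haarWalsh_single (j : ℤ) {l : ℕ} (hl : l ≠ 0) :
    haarWalsh j l (Pi.single ((walshRows j l).2 - 1) 1) = -1 := by
  obtain ⟨l, rfl⟩ := Nat.exists_eq_succ_of_ne_zero hl
  rcases j with J | _
  · have h_last : (walshRows (.ofNat J) (l + 1)).2 - 1 = J + 1 + l := by simp only [walshRows]; lia
    rw [h_last, haarWalsh, Pi.single_eq_of_ne (by lia), Pi.single_eq_same, digitSign_zero,
      digitSign_one, one_mul]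
  · exact (congrArg digitSign (Pi.single_eq_same l 1)).trans digitSign_one

variable {κ : Type*} {d t n : ℕ} {B : Finset κ} {y : κ → Fin d → ℕ → ZMod 2}
  {j : Fin d → ℤ} {m : Fin d → ℕ} {l : Fin d → ℕ}

/-- The function `∏ i, haarWalsh (j i) (l i)` of the digits, restricted to the dyadic box
`I_{j,m}`. -/
def boxWalsh (j : Fin d → ℤ) (m l : Fin d → ℕ) (y : Fin d → ℕ → ZMod 2) : ℝ :=
  ∏ i, if digitPrefix (j i).toNat (y i) = m i then haarWalsh (j i) (l i) (y i) else 0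

lemma abs_boxWalsh (j : Fin d → ℤ) (m l : Fin d → ℕ) (y : Fin d → ℕ → ZMod 2) :
    |boxWalsh j m l y| = if ∀ i, digitPrefix (j i).toNat (y i) = m i then 1 else 0 := by
  simp only [boxWalsh, Finset.abs_prod, apply_ite abs, abs_haarWalsh, abs_zero,
    Finset.prod_ite_zero, Finset.prod_const_one, Finset.mem_univ, true_imp_iff]

lemma boxWalsh_zero (j : Fin d → ℤ) (m : Fin d → ℕ) (y : Fin d → ℕ → ZMod 2) :
    boxWalsh j m 0 y = if ∀ i, digitPrefix (j i).toNat (y i) = m i then 1 else 0 := by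
  simp only [boxWalsh, Pi.zero_apply, haarWalsh_zero, Finset.prod_ite_zero, Finset.prod_const_one,
    Finset.mem_univ, true_imp_iff]

lemma sum_abs_boxWalsh (B : Finset κ) (y : κ → Fin d → ℕ → ZMod 2) (j : Fin d → ℤ)
    (m l : Fin d → ℕ) :
    ∑ k ∈ B, |boxWalsh j m l (y k)| = (boxPoints B y (fun i => (j i).toNat) m).card := by
  simp only [abs_boxWalsh, boxPoints, Finset.sum_boole]

lemma sum_boxWalsh_zero (B : Finset κ) (y : κ → Fin d → ℕ → ZMod 2) (j : Fin d → ℤ)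
    (m : Fin d → ℕ) :
    ∑ k ∈ B, boxWalsh j m 0 (y k) = (boxPoints B y (fun i => (j i).toNat) m).card := by
  simp only [boxWalsh_zero, boxPoints, Finset.sum_boole]

lemma boxWalsh_add_of_prefix_zero (y v : Fin d → ℕ → ZMod 2)
    (hv : ∀ i, ∀ row < (j i).toNat, v i row = 0) :
    boxWalsh j m l (y + v) = boxWalsh j m l y * ∏ i, haarWalsh (j i) (l i) (v i) := by
  have h_prefix (i : Fin d) :
      digitPrefix (j i).toNat (y i + v i) = digitPrefix (j i).toNat (y i) :=
    digitPrefix_eq_digitPrefix_iff.2 fun row h_row => by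
      rw [Pi.add_apply, hv i row h_row, add_zero]
  simp only [boxWalsh, Pi.add_apply, h_prefix, haarWalsh_add, ← Finset.prod_mul_distrib, ite_mul,
    zero_mul]

lemma sum_walshRows_le (j : Fin d → ℤ) (l : Fin d → ℕ) :
    ∑ i, ((walshRows (j i) (l i)).1 + (walshRows (j i) (l i)).2) ≤
      2 * jnorm d j + ∑ i, l i + 2 * d := by
  refine (Finset.sum_le_sum fun i _ => walshRows_fst_add_snd_le (j i) (l i)).trans_eq ?_
  simp only [Finset.sum_add_distrib, ← Finset.mul_sum, jnorm, Finset.sum_const, Finset.card_fin,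
    smul_eq_mul, mul_comm d]

lemma exists_digits_prod_haarWalsh_eq_neg_one (j : Fin d → ℤ) (hl : l ≠ 0) :
    ∃ w : Fin d → ℕ → ZMod 2, (∀ i, ∀ row < (walshRows (j i) (l i)).1, w i row = 0) ∧
      ∏ i, haarWalsh (j i) (l i) (w i) = -1 := by
  obtain ⟨i₀, hi₀⟩ := Function.ne_iff.1 hl
  refine ⟨Pi.single i₀ (Pi.single ((walshRows (j i₀) (l i₀)).2 - 1) 1), fun i row h_row => ?_, ?_⟩
  · rcases eq_or_ne i i₀ with rfl | hi
    · have := walshRows_fst_lt_snd (j i) hi₀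
      rw [Pi.single_eq_same, Pi.single_eq_of_ne (by lia)]
    · rw [Pi.single_eq_of_ne hi, Pi.zero_apply]
  · rw [Finset.prod_eq_single i₀, Pi.single_eq_same, haarWalsh_single _ hi₀]
    · intro i _ hi
      rw [Pi.single_eq_of_ne hi, haarWalsh_zero_right]
    · exact fun h => absurd (Finset.mem_univ i₀) h

lemma sum_boxWalsh_eq_zero (hy : IsShiftNet t n B y) (hl : l ≠ 0)
    (h_cost : 2 * jnorm d j + ∑ i, l i + 2 * d + t ≤ 2 * n) :
    ∑ k ∈ B, boxWalsh j m l (y k) = 0 := by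
  obtain ⟨w, hw_zero, hw_prod⟩ := exists_digits_prod_haarWalsh_eq_neg_one j hl
  obtain ⟨σ, v, hσB, hσ, hv⟩ :=
    hy.exists_shift _ _ w (fun i => walshRows_fst_le_snd (j i) (l i))
      ((Nat.add_le_add_right (sum_walshRows_le j l) t).trans h_cost)
  have h_prefix (i : Fin d) (row : ℕ) (h_row : row < (j i).toNat) : v i row = 0 := by
    have h_lt := h_row.trans_le (toNat_le_walshRows_fst (j i) (l i))
    rw [hv i row (.inl h_lt), hw_zero i row h_lt]
  have h_flip : ∏ i, haarWalsh (j i) (l i) (v i) = -1 := by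
    rw [Finset.prod_congr rfl fun i _ => haarWalsh_congr (hv i), hw_prod]
  have h_neg : ∑ k ∈ B, boxWalsh j m l (y k) = -∑ k ∈ B, boxWalsh j m l (y k) := by
    calc ∑ k ∈ B, boxWalsh j m l (y k) = ∑ k ∈ B, boxWalsh j m l (y (σ k)) :=
        (Finset.sum_equiv σ (fun k => (hσB k).symm) fun k _ => rfl).symm
      _ = -∑ k ∈ B, boxWalsh j m l (y k) := by
        simp only [hσ, boxWalsh_add_of_prefix_zero _ _ h_prefix, h_flip, mul_neg_one,
          Finset.sum_neg_distrib]
  linarith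

end WalshSum

/-! ### Haar coefficients of one block -/

section BlockBounds

variable {κ : Type*} {d t n : ℕ} {B : Finset κ} {y : κ → Fin d → ℕ → ZMod 2}
  {j : Fin d → ℤ} {m : Fin d → ℕ} {l : Fin d → ℕ}

/-- The contribution of the points in the block `B` to `N` times a Haar coefficient of the
discrepancy function, see `haarCoeff_discSeq`. -/
def haarBlock (B : Finset κ) (y : κ → Fin d → ℕ → ZMod 2) (j : Fin d → ℤ) (m : Fin d → ℕ) : ℝ :=
  ∑ k ∈ B, (∏ i, haarTail (j i) (m i) (digitValue (y k i)) - ∏ i, haarMoment (j i) (m i))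

/-- The term with index `l` of the Walsh expansion of the counting part of `haarBlock`. -/
def walshTerm (B : Finset κ) (y : κ → Fin d → ℕ → ZMod 2) (j : Fin d → ℤ) (m l : Fin d → ℕ) : ℝ :=
  (∏ i, haarWalshCoeff (j i) (l i)) * ∑ k ∈ B, boxWalsh j m l (y k)

lemma mem_Dfin_iff : m ∈ Dfin d j ↔ ∀ i, m i < 2 ^ (j i).toNat := mem_boxIndices

lemma tendsto_sum_walshTerm (hj : ∀ i, -1 ≤ j i) (hm : m ∈ Dfin d j) :
    Filter.Tendsto
      (fun K => ∑ l ∈ Fintype.piFinset fun _ : Fin d => Finset.range K, walshTerm B y j m l)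
      Filter.atTop (nhds (∑ k ∈ B, ∏ i, haarTail (j i) (m i) (digitValue (y k i)))) := by
  have h_point (k : κ) := tendsto_finsetProd Finset.univ fun i _ =>
    (hasSum_haarTail (hj i) (mem_Dfin_iff.1 hm i) (y k i)).tendsto_sum_nat
  refine (tendsto_finsetSum B fun k _ => h_point k).congr fun K => ?_
  simp only [Finset.prod_univ_sum, Finset.prod_mul_distrib, walshTerm, boxWalsh, Finset.mul_sum]
  exact Finset.sum_comm

lemma prod_two_pow_toNat (j : Fin d → ℤ) : ∏ i, (2 : ℝ) ^ (j i).toNat = 2 ^ jnorm d j := by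
  rw [Finset.prod_pow_eq_pow_sum, jnorm]

lemma prod_haarMoment (hj : ∀ i, -1 ≤ j i) (hm : m ∈ Dfin d j) :
    ∏ i, haarMoment (j i) (m i) = (∏ i, haarWalshCoeff (j i) 0) / 2 ^ jnorm d j := by
  simp only [haarMoment_eq_haarWalshCoeff (hj _) (mem_Dfin_iff.1 hm _), Finset.prod_div_distrib,
    prod_two_pow_toNat]

lemma card_boxPoints_eq (hy : IsShiftNet t n B y) (hJ : 2 * jnorm d j + t ≤ 2 * n)
    (hm : m ∈ Dfin d j) :
    ((boxPoints B y (fun i => (j i).toNat) m).card : ℝ) = 2 ^ n / 2 ^ jnorm d j := by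
  rw [eq_div_iff (by positivity)]
  exact_mod_cast card_boxPoints_mul hy hJ hm

lemma walshTerm_zero_eq_sum_haarMoment (hy : IsShiftNet t n B y)
    (hJ : 2 * jnorm d j + t ≤ 2 * n) (hj : ∀ i, -1 ≤ j i) (hm : m ∈ Dfin d j) :
    walshTerm B y j m 0 = ∑ _k ∈ B, ∏ i, haarMoment (j i) (m i) := by
  rw [walshTerm, sum_boxWalsh_zero, card_boxPoints_eq hy hJ hm, Finset.sum_const, hy.card_eq,
    nsmul_eq_mul, prod_haarMoment hj hm]
  push_cast
  exact mul_div_left_comm _ _ _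

lemma abs_prod_haarWalshCoeff_le (j : Fin d → ℤ) (l : Fin d → ℕ) :
    |∏ i, haarWalshCoeff (j i) (l i)| ≤ 1 / 2 ^ (jnorm d j + ∑ i, l i) := by
  rw [Finset.abs_prod]
  refine (Finset.prod_le_prod (fun i _ => abs_nonneg _)
    fun i _ => abs_haarWalshCoeff_le (j i) (l i)).trans_eq ?_
  rw [Finset.prod_div_distrib, Finset.prod_const_one, Finset.prod_pow_eq_pow_sum,
    Finset.sum_add_distrib, jnorm]

lemma abs_sum_boxWalsh_le (B : Finset κ) (y : κ → Fin d → ℕ → ZMod 2) (j : Fin d → ℤ)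
    (m l : Fin d → ℕ) :
    |∑ k ∈ B, boxWalsh j m l (y k)| ≤ (boxPoints B y (fun i => (j i).toNat) m).card :=
  (Finset.abs_sum_le_sum_abs _ _).trans_eq (sum_abs_boxWalsh B y j m l)

/-- A term that does not vanish has `∑ i, l i > 2 * n - 2 * |j| - t - 2 * d`; a quarter of the decay
`2 ^ (-∑ i, l i)` of the coefficients is kept to sum over `l`. -/
lemma abs_walshTerm_le (hy : IsShiftNet t n B y) (hJ : 2 * jnorm d j + t ≤ 2 * n)
    (hm : m ∈ Dfin d j) (hl : l ≠ 0) :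
    |walshTerm B y j m l| ≤ (2 : ℝ) ^ (3 * d / 2 - n / 2 - jnorm d j / 2 + 3 * t / 4 : ℝ) *
      ∏ i, ((2 : ℝ) ^ (-(1 / 4) : ℝ)) ^ l i := by
  by_cases h_cost : 2 * jnorm d j + ∑ i, l i + 2 * d + t ≤ 2 * n
  · rw [walshTerm, sum_boxWalsh_eq_zero hy hl h_cost, mul_zero, abs_zero]
    positivity
  · have h_large : (2 * n : ℝ) ≤ 2 * jnorm d j + (∑ i, l i : ℕ) + 2 * d + t := by
      exact_mod_cast (not_le.1 h_cost).le
    calc |walshTerm B y j m l|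
        ≤ 1 / 2 ^ (jnorm d j + ∑ i, l i) * (2 ^ n / 2 ^ jnorm d j) := by
          rw [walshTerm, abs_mul, ← card_boxPoints_eq hy hJ hm]
          exact mul_le_mul (abs_prod_haarWalshCoeff_le j l) (abs_sum_boxWalsh_le B y j m l)
            (abs_nonneg _) (by positivity)
      _ = (2 : ℝ) ^ (n - 2 * jnorm d j - (∑ i, l i : ℕ) : ℝ) := by
          rw [← Real.rpow_natCast, ← Real.rpow_natCast, ← Real.rpow_natCast, one_div,
            ← Real.rpow_neg zero_le_two, ← Real.rpow_sub two_pos, ← Real.rpow_add two_pos]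
          push_cast
          ring_nf
      _ ≤ (2 : ℝ) ^ (3 * d / 2 - n / 2 - jnorm d j / 2 + 3 * t / 4 +
            -(1 / 4) * (∑ i, l i : ℕ) : ℝ) :=
          Real.rpow_le_rpow_of_exponent_le one_le_two (by linarith)
      _ = _ := by
          rw [Real.rpow_add two_pos, Finset.prod_pow_eq_pow_sum, Real.rpow_mul zero_le_two,
            Real.rpow_natCast]

lemma two_rpow_neg_quarter_lt_one : (2 : ℝ) ^ (-(1 / 4) : ℝ) < 1 :=
  Real.rpow_lt_one_of_one_lt_of_neg one_lt_two (by norm_num)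

lemma sum_piFinset_prod_pow_le {ρ : ℝ} (h0 : 0 ≤ ρ) (h1 : ρ < 1) (d K : ℕ) :
    ∑ l ∈ Fintype.piFinset fun _ : Fin d => Finset.range K, ∏ i, ρ ^ l i ≤ (1 - ρ)⁻¹ ^ d := by
  rw [← Finset.prod_univ_sum (fun _ => Finset.range K) fun _ k => ρ ^ k, Finset.prod_const,
    Finset.card_fin, ← tsum_geometric_of_lt_one h0 h1]
  gcongr
  exact (summable_geometric_of_lt_one h0 h1).sum_le_tsum _ fun _ _ => by positivity

/-- The constant of the block bound `abs_haarBlock_le_of_coarse`. -/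
def blockConst (d : ℕ) : ℝ := 2 ^ (3 * d / 2 : ℝ) * (1 - (2 : ℝ) ^ (-(1 / 4) : ℝ))⁻¹ ^ d

lemma abs_sum_walshTerm_sub_le (hy : IsShiftNet t n B y) (hJ : 2 * jnorm d j + t ≤ 2 * n)
    (hm : m ∈ Dfin d j) {K : ℕ} (hK : 0 < K) :
    |∑ l ∈ Fintype.piFinset fun _ : Fin d => Finset.range K, walshTerm B y j m l -
        walshTerm B y j m 0| ≤
      blockConst d * (2 : ℝ) ^ (3 * t / 4 - n / 2 - jnorm d j / 2 : ℝ) := by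
  set A : ℝ := (2 : ℝ) ^ (3 * d / 2 - n / 2 - jnorm d j / 2 + 3 * t / 4 : ℝ) with hA
  set box := Fintype.piFinset fun _ : Fin d => Finset.range K
  have h_mem : 0 ∈ box := Fintype.mem_piFinset.2 fun _ => Finset.mem_range.2 hK
  rw [← Finset.sum_erase_eq_sub h_mem]
  calc |∑ l ∈ box.erase 0, walshTerm B y j m l|
      ≤ ∑ l ∈ box.erase 0, A * ∏ i, ((2 : ℝ) ^ (-(1 / 4) : ℝ)) ^ l i :=
        (Finset.abs_sum_le_sum_abs _ _).trans (Finset.sum_le_sum fun l hl =>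
          abs_walshTerm_le hy hJ hm (Finset.ne_of_mem_erase hl))
    _ ≤ ∑ l ∈ box, A * ∏ i, ((2 : ℝ) ^ (-(1 / 4) : ℝ)) ^ l i :=
        Finset.sum_le_sum_of_subset_of_nonneg (Finset.erase_subset _ _)
          fun _ _ _ => by positivity
    _ ≤ A * (1 - (2 : ℝ) ^ (-(1 / 4) : ℝ))⁻¹ ^ d := by
        rw [← Finset.mul_sum]
        gcongr
        exact sum_piFinset_prod_pow_le (by positivity) two_rpow_neg_quarter_lt_one d K
    _ = blockConst d * (2 : ℝ) ^ (3 * t / 4 - n / 2 - jnorm d j / 2 : ℝ) := by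
        rw [blockConst, mul_right_comm, ← Real.rpow_add two_pos, hA]
        congr 2
        ring

lemma abs_haarBlock_le_of_coarse (hy : IsShiftNet t n B y) (hJ : 2 * jnorm d j + t ≤ 2 * n)
    (hj : ∀ i, -1 ≤ j i) (hm : m ∈ Dfin d j) :
    |haarBlock B y j m| ≤
      blockConst d * (2 : ℝ) ^ (3 * t / 4 - n / 2 - jnorm d j / 2 : ℝ) := by
  rw [haarBlock, Finset.sum_sub_distrib, ← walshTerm_zero_eq_sum_haarMoment hy hJ hj hm]
  exact le_of_tendsto ((tendsto_sum_walshTerm hj hm).sub_const _).abs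
    ((Filter.eventually_gt_atTop 0).mono fun K => abs_sum_walshTerm_sub_le hy hJ hm)

lemma abs_haarTail_le {j : ℤ} (hj : -1 ≤ j) {m : ℕ} (hm : m < 2 ^ j.toNat) (y : ℕ → ZMod 2) :
    |haarTail j m (digitValue y)| ≤ if digitPrefix j.toNat y = m then 2 / 2 ^ j.toNat else 0 := by
  have h_sum := hasSum_haarTail hj hm y
  split_ifs with h
  · refine h_sum.norm_le_of_bounded (hasSum_geometric_two.div_const (2 ^ j.toNat)) fun l => ?_
    rw [if_pos h, norm_mul, Real.norm_eq_abs, Real.norm_eq_abs, abs_haarWalsh, mul_one]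
    refine (abs_haarWalshCoeff_le j l).trans_eq ?_
    rw [pow_add, one_div_pow, div_div, mul_comm]
  · simp only [h, if_false, mul_zero] at h_sum
    rw [h_sum.unique hasSum_zero, abs_zero]

lemma abs_prod_haarTail_le (hj : ∀ i, -1 ≤ j i) (hm : m ∈ Dfin d j) (y : Fin d → ℕ → ZMod 2) :
    |∏ i, haarTail (j i) (m i) (digitValue (y i))| ≤
      2 ^ d / 2 ^ jnorm d j * |boxWalsh j m 0 y| := by
  rw [Finset.abs_prod]
  refine (Finset.prod_le_prod (fun i _ => abs_nonneg _)
    fun i _ => abs_haarTail_le (hj i) (mem_Dfin_iff.1 hm i) (y i)).trans_eq ?_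
  rw [Finset.prod_ite_zero, abs_boxWalsh, mul_ite, mul_one, mul_zero, Finset.prod_div_distrib,
    prod_two_pow_toNat, Finset.prod_const, Finset.card_fin]
  simp only [Finset.mem_univ, true_imp_iff]

lemma abs_prod_haarMoment_le (hj : ∀ i, -1 ≤ j i) (hm : m ∈ Dfin d j) :
    |∏ i, haarMoment (j i) (m i)| ≤ 1 / 2 ^ jnorm d j / 2 ^ jnorm d j := by
  rw [prod_haarMoment hj hm, abs_div, abs_of_pos (by positivity : (0 : ℝ) < 2 ^ jnorm d j)]
  gcongr
  simpa using abs_prod_haarWalshCoeff_le j 0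

lemma abs_haarBlock_le_card_boxPoints (hB : B.card = 2 ^ n) (hj : ∀ i, -1 ≤ j i)
    (hm : m ∈ Dfin d j) :
    |haarBlock B y j m| ≤
      2 ^ d / 2 ^ jnorm d j * (boxPoints B y (fun i => (j i).toNat) m).card +
        2 ^ n * (1 / 2 ^ jnorm d j / 2 ^ jnorm d j) := by
  calc |haarBlock B y j m|
      ≤ ∑ k ∈ B, (2 ^ d / 2 ^ jnorm d j * |boxWalsh j m 0 (y k)| +
          1 / 2 ^ jnorm d j / 2 ^ jnorm d j) :=
        (Finset.abs_sum_le_sum_abs _ _).trans (Finset.sum_le_sum fun k _ => (abs_sub _ _).trans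
          (add_le_add (abs_prod_haarTail_le hj hm (y k)) (abs_prod_haarMoment_le hj hm)))
    _ = _ := by
        rw [Finset.sum_add_distrib, ← Finset.mul_sum, sum_abs_boxWalsh, Finset.sum_const, hB,
          nsmul_eq_mul]
        push_cast
        rfl

end BlockBounds

/-! ### Norms over the positions at one level -/

section FinLpNorm

variable {ι κ : Type*} {p : ℝ} {s : Finset ι} {f g : ι → ℝ}

/-- The `ℓ^p` norm of `f` over the finite set `s`. -/
def finLpNorm (p : ℝ) (s : Finset ι) (f : ι → ℝ) : ℝ := (∑ i ∈ s, |f i| ^ p) ^ (1 / p)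

lemma finLpNorm_nonneg (p : ℝ) (s : Finset ι) (f : ι → ℝ) : 0 ≤ finLpNorm p s f :=
  Real.rpow_nonneg (Finset.sum_nonneg fun _ _ => by positivity) _

lemma finLpNorm_le_of_abs_le (hp : 0 < p) (h : ∀ i ∈ s, |f i| ≤ |g i|) :
    finLpNorm p s f ≤ finLpNorm p s g :=
  Real.rpow_le_rpow (Finset.sum_nonneg fun _ _ => by positivity)
    (Finset.sum_le_sum fun i hi => Real.rpow_le_rpow (abs_nonneg _) (h i hi) hp.le) (by positivity)

lemma finLpNorm_const (hp : p ≠ 0) (s : Finset ι) (c : ℝ) :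
    finLpNorm p s (fun _ => c) = (s.card : ℝ) ^ (1 / p) * |c| := by
  rw [finLpNorm, Finset.sum_const, nsmul_eq_mul, Real.mul_rpow (by positivity) (by positivity),
    ← Real.rpow_mul (abs_nonneg c), mul_one_div_cancel hp, Real.rpow_one]

lemma finLpNorm_const_mul (hp : p ≠ 0) (c : ℝ) (s : Finset ι) (f : ι → ℝ) :
    finLpNorm p s (fun i => c * f i) = |c| * finLpNorm p s f := by
  simp only [finLpNorm, abs_mul, Real.mul_rpow (abs_nonneg _) (abs_nonneg _), ← Finset.mul_sum]
  rw [Real.mul_rpow (by positivity) (Finset.sum_nonneg fun _ _ => by positivity),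
    ← Real.rpow_mul (abs_nonneg c), mul_one_div_cancel hp, Real.rpow_one]

lemma finLpNorm_add_le (hp : 1 ≤ p) (s : Finset ι) (f g : ι → ℝ) :
    finLpNorm p s (fun i => f i + g i) ≤ finLpNorm p s f + finLpNorm p s g :=
  Real.Lp_add_le s f g hp

lemma finLpNorm_sum_le (hp : 1 ≤ p) (s : Finset ι) (T : Finset κ) (f : κ → ι → ℝ) :
    finLpNorm p s (fun i => ∑ k ∈ T, f k i) ≤ ∑ k ∈ T, finLpNorm p s (f k) := by
  classical
  induction T using Finset.induction_on with
  | empty =>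
    simp only [Finset.sum_empty]
    rw [finLpNorm_const (by positivity), abs_zero, mul_zero]
  | insert k T hk ih =>
    simp only [Finset.sum_insert hk]
    exact (finLpNorm_add_le hp s _ _).trans (add_le_add_right ih _)

lemma finLpNorm_le_rpow_mul_sum_rpow (hp : 1 ≤ p) {Q : ℝ} (hQ0 : 0 ≤ Q) (hQ : ∀ i ∈ s, |f i| ≤ Q) :
    finLpNorm p s f ≤ Q ^ (1 - 1 / p) * (∑ i ∈ s, |f i|) ^ (1 / p) := by
  have hp0 : p ≠ 0 := by positivity
  have h_term (i : ι) (hi : i ∈ s) : |f i| ^ p ≤ Q ^ (p - 1) * |f i| := by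
    calc |f i| ^ p = |f i| ^ (p - 1) * |f i| := by
          rw [← Real.rpow_add_one' (abs_nonneg _) (by rwa [sub_add_cancel]), sub_add_cancel]
      _ ≤ Q ^ (p - 1) * |f i| := by
          gcongr
          exact hQ i hi
  calc finLpNorm p s f ≤ (∑ i ∈ s, Q ^ (p - 1) * |f i|) ^ (1 / p) :=
        Real.rpow_le_rpow (Finset.sum_nonneg fun _ _ => by positivity)
          (Finset.sum_le_sum h_term) (by positivity)
    _ = Q ^ (1 - 1 / p) * (∑ i ∈ s, |f i|) ^ (1 / p) := by
        rw [← Finset.mul_sum, Real.mul_rpow (by positivity) (by positivity), ← Real.rpow_mul hQ0,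
          mul_one_div, sub_div, div_self hp0]

end FinLpNorm

section BlockNorms

variable {κ : Type*} {d t n : ℕ} {B : Finset κ} {y : κ → Fin d → ℕ → ZMod 2} {j : Fin d → ℤ}
  {p : ℝ}

lemma card_Dfin (j : Fin d → ℤ) : (Dfin d j).card = 2 ^ jnorm d j := card_boxIndices _

lemma blockConst_pos (d : ℕ) : 0 < blockConst d := by
  have := two_rpow_neg_quarter_lt_one
  exact mul_pos (by positivity) (pow_pos (inv_pos.2 (sub_pos.2 this)) d)

lemma finLpNorm_haarBlock_le_of_coarse (hp : 1 ≤ p) (hy : IsShiftNet t n B y)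
    (hJ : 2 * jnorm d j + t ≤ 2 * n) (hj : ∀ i, -1 ≤ j i) :
    finLpNorm p (Dfin d j) (haarBlock B y j) ≤
      blockConst d * (2 : ℝ) ^ (3 * t / 4 - n / 2 - jnorm d j / 2 + jnorm d j * (1 / p) : ℝ) := by
  have h_pos := blockConst_pos d
  refine (finLpNorm_le_of_abs_le (by positivity) fun m hm =>
    (abs_haarBlock_le_of_coarse hy hJ hj hm).trans (le_abs_self _)).trans_eq ?_
  rw [finLpNorm_const (by positivity), card_Dfin, abs_of_pos (by positivity), mul_left_comm]
  push_cast
  rw [← Real.rpow_natCast, ← Real.rpow_mul zero_le_two, ← Real.rpow_add two_pos]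
  congr 2
  ring

lemma finLpNorm_card_boxPoints_le (hp : 1 ≤ p) (hy : IsShiftNet t n B y)
    (hJ : 2 * n ≤ 2 * jnorm d j + t) :
    finLpNorm p (Dfin d j) (fun m => ((boxPoints B y (fun i => (j i).toNat) m).card : ℝ)) ≤
      (2 : ℝ) ^ ((t + 1) / 2 * (1 - 1 / p) + n * (1 / p) : ℝ) := by
  have h_card (m : Fin d → ℕ) (hm : m ∈ Dfin d j) :
      |((boxPoints B y (fun i => (j i).toNat) m).card : ℝ)| ≤ (2 : ℝ) ^ ((t + 1) / 2 : ℝ) := by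
    rw [Nat.abs_cast]
    calc ((boxPoints B y (fun i => (j i).toNat) m).card : ℝ) ≤ 2 ^ ((t + 1) / 2) := by
          exact_mod_cast card_boxPoints_le hy hJ hm
      _ ≤ (2 : ℝ) ^ ((t + 1) / 2 : ℝ) := by
          rw [← Real.rpow_natCast]
          exact Real.rpow_le_rpow_of_exponent_le one_le_two (by exact_mod_cast Nat.cast_div_le)
  refine (finLpNorm_le_rpow_mul_sum_rpow hp (by positivity) h_card).trans_eq ?_
  have h_sum : ∑ m ∈ Dfin d j, ((boxPoints B y (fun i => (j i).toNat) m).card : ℝ) = 2 ^ n := by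
    exact_mod_cast (sum_card_boxPoints B y _).trans hy.card_eq
  simp only [Nat.abs_cast]
  rw [h_sum, ← Real.rpow_natCast, ← Real.rpow_mul zero_le_two, ← Real.rpow_mul zero_le_two,
    ← Real.rpow_add two_pos]

lemma finLpNorm_haarBlock_le_of_fine (hp : 1 ≤ p) (hy : IsShiftNet t n B y)
    (hJ : 2 * n ≤ 2 * jnorm d j + t) (hj : ∀ i, -1 ≤ j i) :
    finLpNorm p (Dfin d j) (haarBlock B y j) ≤
      (2 ^ (d + 1) + 1) * (2 : ℝ) ^
        (t / 2 - jnorm d j + jnorm d j * (1 / p) + (n - jnorm d j - t / 2) * (1 / p) : ℝ) := by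
  have hp0 : 0 < 1 / p := by positivity
  have hp1 : 1 / p ≤ 1 := div_le_one_of_le₀ hp (by positivity)
  have hJ' : (2 * n : ℝ) ≤ 2 * jnorm d j + t := by exact_mod_cast hJ
  rw [add_one_mul]
  refine (finLpNorm_le_of_abs_le (by positivity) fun m hm =>
    (abs_haarBlock_le_card_boxPoints hy.card_eq hj hm).trans (le_abs_self _)).trans
      ((finLpNorm_add_le hp _ _ _).trans (add_le_add ?_ ?_))
  · rw [finLpNorm_const_mul (by positivity), abs_of_pos (by positivity)]
    refine (mul_le_mul_of_nonneg_left (finLpNorm_card_boxPoints_le hp hy hJ)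
      (by positivity)).trans ?_
    rw [div_mul_eq_mul_div, mul_div_assoc, pow_succ, mul_assoc, ← Real.rpow_natCast 2 (jnorm d j),
      ← Real.rpow_sub two_pos]
    have h_two (x : ℝ) : (2 : ℝ) * 2 ^ x = 2 ^ (1 + x) := by
      rw [Real.rpow_add two_pos, Real.rpow_one]
    rw [h_two]
    gcongr
    · exact one_le_two
    · nlinarith
  · rw [finLpNorm_const (by positivity), card_Dfin, abs_of_pos (by positivity)]
    calc ((2 ^ jnorm d j : ℕ) : ℝ) ^ (1 / p) * (2 ^ n * (1 / 2 ^ jnorm d j / 2 ^ jnorm d j))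
        = (2 : ℝ) ^ (n - 2 * jnorm d j + jnorm d j * (1 / p) : ℝ) := by
          rw [Real.rpow_add two_pos, Real.rpow_sub two_pos, two_mul (jnorm d j : ℝ),
            Real.rpow_add two_pos, Real.rpow_mul zero_le_two]
          push_cast [Real.rpow_natCast]
          field_simp
      _ ≤ _ := Real.rpow_le_rpow_of_exponent_le one_le_two (by nlinarith)

lemma finLpNorm_haarBlock_le (hp : 1 ≤ p) (hy : IsShiftNet t n B y) (hj : ∀ i, -1 ≤ j i) {δ : ℝ}
    (hδ : δ = n - jnorm d j - t / 2) :
    finLpNorm p (Dfin d j) (haarBlock B y j) ≤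
      (blockConst d + 2 ^ (d + 1) + 1) * (2 : ℝ) ^
        (t / 2 - jnorm d j + jnorm d j * (1 / p) + min (-(δ / 2)) (δ * (1 / p)) : ℝ) := by
  have h_pos := blockConst_pos d
  have hp0 : 0 < 1 / p := by positivity
  rcases le_total (2 * jnorm d j + t) (2 * n) with hJ | hJ
  · have hJ' : (2 * jnorm d j + t : ℝ) ≤ 2 * n := by exact_mod_cast hJ
    rw [min_eq_left (by nlinarith)]
    refine (finLpNorm_haarBlock_le_of_coarse hp hy hJ hj).trans (mul_le_mul ?_ (le_of_eq ?_)
      (by positivity) (by positivity))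
    · linarith [pow_pos (two_pos : (0 : ℝ) < 2) (d + 1)]
    · rw [hδ]
      congr 1
      ring
  · have hJ' : (2 * n : ℝ) ≤ 2 * jnorm d j + t := by exact_mod_cast hJ
    rw [min_eq_right (by nlinarith), hδ]
    refine (finLpNorm_haarBlock_le_of_fine hp hy hJ hj).trans ?_
    gcongr
    linarith

end BlockNorms

/-! ### Superposition of the blocks -/

section DyadicSums

lemma sum_Ico_div_two_pow_mul_eq_sum_dyadicBlock {M : Type*} [AddCommMonoid M] (f : ℕ → M)
    (N K : ℕ) :
    ∑ k ∈ Finset.Ico (N / 2 ^ K * 2 ^ K) N, f k =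
      ∑ n ∈ Finset.range K with N / 2 ^ n % 2 = 1, ∑ k ∈ dyadicBlock n (N / 2 ^ n - 1), f k := by
  induction K with
  | zero => simp
  | succ K ih =>
    have h_half : N / 2 ^ (K + 1) = N / 2 ^ K / 2 := by rw [pow_succ, Nat.div_div_eq_div_mul]
    rw [Finset.range_add_one, Finset.filter_insert, h_half, pow_succ', ← mul_assoc]
    obtain ⟨b, hb | hb⟩ := Nat.even_or_odd' (N / 2 ^ K)
    · rw [if_neg (by omega), ← ih, hb, Nat.mul_div_cancel_left b two_pos, mul_comm b 2]
    · have h_le : (2 * b + 1) * 2 ^ K ≤ N := hb ▸ Nat.div_mul_le_self N (2 ^ K)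
      rw [if_pos (by omega), Finset.sum_insert (by simp), ← ih, hb, dyadicBlock,
        Nat.add_sub_cancel, Nat.mul_add_div two_pos, Nat.div_eq_of_lt one_lt_two, add_zero,
        mul_comm b 2, Finset.sum_Ico_consecutive f (by gcongr; omega) h_le]

/-- Each binary digit `1` of `N` contributes one block. -/
lemma sum_range_eq_sum_dyadicBlock {M : Type*} [AddCommMonoid M] (f : ℕ → M) (N : ℕ) :
    ∑ k ∈ Finset.range N, f k =
      ∑ n ∈ Finset.range (Nat.log 2 N + 1) with N / 2 ^ n % 2 = 1,
        ∑ k ∈ dyadicBlock n (N / 2 ^ n - 1), f k := by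
  rw [← sum_Ico_div_two_pow_mul_eq_sum_dyadicBlock,
    Nat.div_eq_of_lt (Nat.lt_pow_succ_log_self one_lt_two N), zero_mul, Finset.range_eq_Ico]

lemma summable_natAbs_pow_mul_geometric (e : ℕ) {ρ : ℝ} (h0 : 0 < ρ) (h1 : ρ < 1) :
    Summable fun z : ℤ => ((z.natAbs : ℝ) + 1) ^ e * ρ ^ z.natAbs := by
  have h_nat : Summable fun u : ℕ => ((u : ℝ) + 1) ^ e * ρ ^ u := by
    have h_pow := (summable_nat_add_iff 1).2
      (summable_pow_mul_geometric_of_norm_lt_one e (r := ρ) (by rwa [Real.norm_of_nonneg h0.le]))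
    refine (h_pow.mul_left ρ⁻¹).congr fun u => ?_
    rw [Nat.cast_add_one, pow_succ' ρ, mul_left_comm, inv_mul_cancel_left₀ h0.ne']
  exact .of_nat_of_neg (by simpa using h_nat) (by simpa using h_nat)

lemma exists_sum_two_rpow_neg_abs_sub_le {θ : ℝ} (hθ : 0 < θ) :
    ∃ C : ℝ, 0 < C ∧ ∀ (c : ℝ) (S : Finset ℕ),
      ∑ n ∈ S, (2 : ℝ) ^ (-(θ * |(n : ℝ) - c|)) ≤ C := by
  set ρ : ℝ := 2 ^ (-θ) with hρ
  have hρ0 : 0 < ρ := by positivity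
  have h_summable : Summable fun z : ℤ => ρ ^ z.natAbs := by
    simpa using summable_natAbs_pow_mul_geometric 0 hρ0
      (Real.rpow_lt_one_of_one_lt_of_neg one_lt_two (neg_neg_of_pos hθ))
  refine ⟨2 ^ θ * ∑' z : ℤ, ρ ^ z.natAbs, mul_pos (by positivity)
    (h_summable.tsum_pos (fun _ => by positivity) 0 (by positivity)), fun c S => ?_⟩
  have h_term (n : ℕ) : (2 : ℝ) ^ (-(θ * |(n : ℝ) - c|)) ≤ 2 ^ θ * ρ ^ ((n : ℤ) - ⌊c⌋).natAbs := by
    rw [hρ, ← Real.rpow_mul_natCast zero_le_two, ← Real.rpow_add two_pos]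
    refine Real.rpow_le_rpow_of_exponent_le one_le_two ?_
    have h_abs : |(n : ℝ) - ⌊c⌋| ≤ |(n : ℝ) - c| + 1 := by
      have := abs_sub_le (n : ℝ) c ⌊c⌋
      rw [Int.self_sub_floor, Int.abs_fract] at this
      linarith [Int.fract_lt_one c]
    rw [Nat.cast_natAbs]
    push_cast
    nlinarith
  calc ∑ n ∈ S, (2 : ℝ) ^ (-(θ * |(n : ℝ) - c|))
      ≤ ∑ n ∈ S, 2 ^ θ * ρ ^ ((n : ℤ) - ⌊c⌋).natAbs := Finset.sum_le_sum fun n _ => h_term n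
    _ = 2 ^ θ * ∑ n ∈ S, ρ ^ ((n : ℤ) - ⌊c⌋).natAbs := by rw [Finset.mul_sum]
    _ ≤ 2 ^ θ * ∑' z : ℤ, ρ ^ z.natAbs := by
        have h_inj : Function.Injective fun n : ℕ => (n : ℤ) - ⌊c⌋ :=
          fun a b h => by simpa using h
        gcongr
        exact (Finset.sum_map S ⟨_, h_inj⟩ fun z : ℤ => ρ ^ z.natAbs).symm.trans_le
          (h_summable.sum_le_tsum _ fun _ _ => by positivity)

end DyadicSums

section CoefficientNorms

variable {t N : ℕ}

lemma haarCoeff_discSeq_digitalSeq {d : ℕ} (E : Fin d → ℕ → ℕ → ZMod 2) (hN : N ≠ 0)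
    (j : Fin d → ℤ) (m : Fin d → ℕ) :
    haarCoeff d (discSeq d (digitalSeq d E) N) j m =
      (1 / N : ℝ) * ∑ n ∈ Finset.range (Nat.log 2 N + 1) with N / 2 ^ n % 2 = 1,
        haarBlock (dyadicBlock n (N / 2 ^ n - 1)) (fun k i => digitVec (E i) k) j m := by
  rw [haarCoeff_discSeq _ hN, sum_range_eq_sum_dyadicBlock]
  simp only [haarBlock, digitalSeq, digitalCoord_eq_digitValue]

lemma min_neg_half_le_neg_abs_add {δ Δ σ θ u : ℝ} (hσ : 0 ≤ σ) (hθ : θ ≤ 1 / 2) (hθu : θ ≤ u - σ)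
    (hδ : δ ≤ Δ) : min (-(δ / 2)) (δ * u) ≤ -(θ * |δ|) + σ * min 0 Δ := by
  rcases le_total 0 δ with h | h
  · rw [abs_of_nonneg h, min_eq_left (h.trans hδ)]
    exact (min_le_left _ _).trans (by nlinarith)
  · rw [abs_of_nonpos h]
    refine (min_le_right _ _).trans ?_
    nlinarith [mul_le_mul_of_nonneg_left (le_min h hδ) hσ]

lemma finLpNorm_haarCoeff_le_sum {d : ℕ} {p : ℝ} (hp : 1 ≤ p) (E : Fin d → ℕ → ℕ → ZMod 2)
    (hN : N ≠ 0) (j : Fin d → ℤ) :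
    finLpNorm p (Dfin d j) (haarCoeff d (discSeq d (digitalSeq d E) N) j) ≤
      (1 / N : ℝ) * ∑ n ∈ Finset.range (Nat.log 2 N + 1) with N / 2 ^ n % 2 = 1,
        finLpNorm p (Dfin d j)
          (haarBlock (dyadicBlock n (N / 2 ^ n - 1)) (fun k i => digitVec (E i) k) j) := by
  rw [show haarCoeff d (discSeq d (digitalSeq d E) N) j = _ from
    funext (haarCoeff_discSeq_digitalSeq E hN j), finLpNorm_const_mul (by positivity),
    abs_of_nonneg (by positivity)]
  gcongr
  exact finLpNorm_sum_le hp _ _ _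

lemma finLpNorm_haarBlock_le_of_le_log {κ : Type*} {d n : ℕ} {B : Finset κ}
    {y : κ → Fin d → ℕ → ZMod 2} {j : Fin d → ℤ} {p σ θ : ℝ} (hp : 1 ≤ p) (hσ : 0 ≤ σ)
    (hθ : θ ≤ 1 / 2) (hθp : θ ≤ 1 / p - σ) (hy : IsShiftNet t n B y) (hj : j ∈ validJ d)
    (hn : n ≤ Nat.log 2 N) :
    finLpNorm p (Dfin d j) (haarBlock B y j) ≤
      (blockConst d + 2 ^ (d + 1) + 1) *
        (2 : ℝ) ^ (t / 2 - jnorm d j + jnorm d j * (1 / p) +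
          σ * min (0 : ℝ) (Nat.log 2 N - jnorm d j) : ℝ) *
        (2 : ℝ) ^ (-(θ * |(n : ℝ) - (jnorm d j + t / 2)|)) := by
  have hn' : (n : ℝ) ≤ Nat.log 2 N := by exact_mod_cast hn
  have h_pos := blockConst_pos d
  refine (finLpNorm_haarBlock_le hp hy hj (sub_sub (n : ℝ) _ (t / 2)).symm).trans ?_
  rw [mul_assoc, ← Real.rpow_add two_pos]
  refine mul_le_mul_of_nonneg_left (Real.rpow_le_rpow_of_exponent_le one_le_two ?_) (by positivity)
  have := min_neg_half_le_neg_abs_add hσ hθ hθp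
    (by linarith [t.cast_nonneg (α := ℝ)] :
      (n : ℝ) - (jnorm d j + t / 2) ≤ Nat.log 2 N - jnorm d j)
  linarith

lemma exists_finLpNorm_haarCoeff_le (d : ℕ) {p σ : ℝ} (hp : 1 ≤ p) (hσ0 : 0 ≤ σ)
    (hσ1 : σ < 1 / p) :
    ∃ C : ℝ, 0 < C ∧ ∀ (t : ℕ) (E : Fin d → ℕ → ℕ → ZMod 2), IsOrderSeq 2 t d E →
      ∀ N ≠ 0, ∀ j ∈ validJ d,
        finLpNorm p (Dfin d j) (haarCoeff d (discSeq d (digitalSeq d E) N) j) ≤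
          C / N * (2 : ℝ) ^ (t / 2 - jnorm d j + jnorm d j * (1 / p) +
            σ * min (0 : ℝ) (Nat.log 2 N - jnorm d j) : ℝ) := by
  obtain ⟨C, hC, h_geom⟩ := exists_sum_two_rpow_neg_abs_sub_le
    (lt_min one_half_pos (sub_pos.2 hσ1))
  have hK : 0 < blockConst d + 2 ^ (d + 1) + 1 := by
    linarith [blockConst_pos d, pow_pos (two_pos : (0 : ℝ) < 2) (d + 1)]
  refine ⟨(blockConst d + 2 ^ (d + 1) + 1) * C, mul_pos hK hC, fun t E hE N hN j hj => ?_⟩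
  have h_sum := Finset.sum_le_sum fun n
      (hn : n ∈ {n ∈ Finset.range (Nat.log 2 N + 1) | N / 2 ^ n % 2 = 1}) =>
    finLpNorm_haarBlock_le_of_le_log hp hσ0 (min_le_left _ _) (min_le_right _ _)
      (isShiftNet_dyadicBlock hE n (N / 2 ^ n - 1)) hj
      (Nat.lt_succ_iff.1 (Finset.mem_range.1 (Finset.mem_filter.1 hn).1))
  rw [← Finset.mul_sum] at h_sum
  refine (finLpNorm_haarCoeff_le_sum hp E hN j).trans ((mul_le_mul_of_nonneg_left
    (h_sum.trans (mul_le_mul_of_nonneg_left (h_geom _ _) (by positivity)))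
    (by positivity)).trans_eq ?_)
  ring

end CoefficientNorms

/-! ### Summation over the levels -/

section WeightedCoefficients

variable {N : ℕ}

lemma two_rpow_log_mul_le_rpow (hN : N ≠ 0) {s : ℝ} (hs : 0 ≤ s) :
    (2 : ℝ) ^ (Nat.log 2 N * s) ≤ (N : ℝ) ^ s := by
  rw [Real.rpow_mul zero_le_two, Real.rpow_natCast]
  exact Real.rpow_le_rpow (by positivity) (by exact_mod_cast Nat.pow_log_le_self 2 hN) hs

lemma mul_add_mul_min_le {s σ ϑ k L : ℝ} (hs : ϑ ≤ s) (hσ : ϑ ≤ σ - s) :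
    k * s + σ * min 0 (L - k) ≤ L * s - ϑ * |k - L| := by
  rcases le_total k L with h | h
  · rw [min_eq_left (by linarith), abs_of_nonpos (by linarith)]
    nlinarith
  · rw [min_eq_right (by linarith), abs_of_nonneg (by linarith)]
    nlinarith

/-- Any exponent `σ` strictly between `s` and `1 / p` yields decay on both sides of the critical
level `log₂ N`. -/
lemma exists_two_rpow_mul_finLpNorm_haarCoeff_le (d : ℕ) {p s : ℝ} (hp : 1 ≤ p) (hs0 : 0 < s)
    (hs1 : s < 1 / p) :
    ∃ C : ℝ, 0 < C ∧ ∃ ρ : ℝ, 0 < ρ ∧ ρ < 1 ∧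
      ∀ (t : ℕ) (E : Fin d → ℕ → ℕ → ZMod 2), IsOrderSeq 2 t d E → ∀ N ≠ 0, ∀ j ∈ validJ d,
        (2 : ℝ) ^ (jnorm d j * (s - 1 / p + 1)) *
            finLpNorm p (Dfin d j) (haarCoeff d (discSeq d (digitalSeq d E) N) j) ≤
          C * 2 ^ (t : ℝ) * (N : ℝ) ^ (s - 1) * ρ ^ ((jnorm d j : ℤ) - Nat.log 2 N).natAbs := by
  obtain ⟨σ, hσ, hσp⟩ := exists_between hs1
  obtain ⟨C, hC, h_coeff⟩ := exists_finLpNorm_haarCoeff_le d hp (hs0.trans hσ).le hσp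
  set ϑ := min s (σ - s)
  have hϑ : 0 < ϑ := lt_min hs0 (sub_pos.2 hσ)
  refine ⟨C, hC, 2 ^ (-ϑ), by positivity,
    Real.rpow_lt_one_of_one_lt_of_neg one_lt_two (neg_neg_of_pos hϑ), fun t E hE N hN j hj => ?_⟩
  set k := jnorm d j
  set L := Nat.log 2 N
  have hN0 : (0 : ℝ) < N := by positivity
  have h_exp : k * (s - 1 / p + 1) + (t / 2 - k + k * (1 / p) + σ * min (0 : ℝ) (L - k)) ≤
      t + L * s + -ϑ * ((k : ℤ) - L).natAbs := by
    rw [Nat.cast_natAbs]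
    push_cast
    linarith [t.cast_nonneg (α := ℝ),
      mul_add_mul_min_le (k := k) (L := L) (min_le_left s (σ - s)) (min_le_right s (σ - s))]
  calc (2 : ℝ) ^ (k * (s - 1 / p + 1)) *
        finLpNorm p (Dfin d j) (haarCoeff d (discSeq d (digitalSeq d E) N) j)
      ≤ 2 ^ (k * (s - 1 / p + 1)) *
          (C / N * 2 ^ (t / 2 - k + k * (1 / p) + σ * min (0 : ℝ) (L - k) : ℝ)) := by
        gcongr
        exact h_coeff t E hE N hN j hj
    _ = C / N * 2 ^ (k * (s - 1 / p + 1) +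
          (t / 2 - k + k * (1 / p) + σ * min (0 : ℝ) (L - k)) : ℝ) := by
        rw [Real.rpow_add two_pos (k * (s - 1 / p + 1))]
        ring
    _ ≤ C / N * 2 ^ (t + L * s + -ϑ * ((k : ℤ) - L).natAbs : ℝ) := by
        gcongr
        exact one_le_two
    _ = C / N * (2 ^ (t : ℝ) * 2 ^ (L * s) * (2 ^ (-ϑ)) ^ ((k : ℤ) - L).natAbs) := by
        rw [Real.rpow_add two_pos, Real.rpow_add two_pos, Real.rpow_mul_natCast zero_le_two]
    _ ≤ C / N * (2 ^ (t : ℝ) * N ^ s * (2 ^ (-ϑ)) ^ ((k : ℤ) - L).natAbs) := by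
        gcongr
        exact two_rpow_log_mul_le_rpow hN hs0.le
    _ = C * 2 ^ (t : ℝ) * (N : ℝ) ^ (s - 1) * (2 ^ (-ϑ)) ^ ((k : ℤ) - L).natAbs := by
        rw [Real.rpow_sub_one hN0.ne']
        ring

end WeightedCoefficients

section LevelSums

lemma toNat_le_jnorm {d : ℕ} (j : Fin d → ℤ) (i : Fin d) : (j i).toNat ≤ jnorm d j :=
  Finset.single_le_sum (f := fun i => (j i).toNat) (fun _ _ => Nat.zero_le _) (Finset.mem_univ i)

lemma card_jnorm_fiber_le (e k : ℕ) :
    ENat.card ((fun j : validJ (e + 1) => jnorm (e + 1) j.1) ⁻¹' {k}) ≤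
      (2 ^ (e + 1) * (k + 1) ^ e : ℕ) := by
  -- `j` is recovered from `{i | j i = -1}`, `k`, and the positive parts of all but one coordinate.
  let code (j : (fun j : validJ (e + 1) => jnorm (e + 1) j.1) ⁻¹' {k}) :
      (Fin (e + 1) → Bool) × (Fin e → Fin (k + 1)) :=
    (fun i => decide (j.1.1 i = -1), fun i => Fin.ofNat (k + 1) (j.1.1 i.succ).toNat)
  have h_inj : Function.Injective code := by
    rintro ⟨⟨j, hj⟩, hjk : jnorm (e + 1) j = k⟩ ⟨⟨j', hj'⟩, hjk' : jnorm (e + 1) j' = k⟩ h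
    obtain ⟨h_neg, h_pos⟩ := Prod.mk.inj h
    have h_succ (i : Fin e) : (j i.succ).toNat = (j' i.succ).toNat := by
      have h_lt := Nat.lt_succ_of_le ((toNat_le_jnorm j i.succ).trans_eq hjk)
      have h_lt' := Nat.lt_succ_of_le ((toNat_le_jnorm j' i.succ).trans_eq hjk')
      simpa [Fin.ofNat, Nat.mod_eq_of_lt h_lt, Nat.mod_eq_of_lt h_lt'] using congrFun h_pos i
    have h_zero : (j 0).toNat = (j' 0).toNat := by
      have h_sum := hjk.trans hjk'.symm
      rw [jnorm, jnorm, Fin.sum_univ_succ, Fin.sum_univ_succ,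
        Finset.sum_congr rfl fun i _ => h_succ i] at h_sum
      exact Nat.add_right_cancel h_sum
    have h_toNat (i : Fin (e + 1)) : (j i).toNat = (j' i).toNat := Fin.cases h_zero h_succ i
    refine Subtype.ext (Subtype.ext (funext fun i => ?_))
    have h_iff : j i = -1 ↔ j' i = -1 := decide_eq_decide.1 (congrFun h_neg i)
    change j i = j' i
    have := h_toNat i
    have : -1 ≤ j i := hj i
    have : -1 ≤ j' i := hj' i
    omega
  refine (ENat.card_le_card_of_injective h_inj).trans_eq ?_
  rw [ENat.card_eq_coe_fintype_card]
  simp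

lemma tsum_validJ_comp_jnorm_le (e : ℕ) (g : ℕ → ℝ≥0∞) :
    ∑' j : validJ (e + 1), g (jnorm (e + 1) j.1) ≤
      ∑' k : ℕ, ((2 ^ (e + 1) * (k + 1) ^ e : ℕ) : ℝ≥0∞) * g k := by
  rw [← ENNReal.tsum_fiberwise _ fun j : validJ (e + 1) => jnorm (e + 1) j.1]
  refine ENNReal.tsum_le_tsum fun k => ?_
  calc ∑' j : (fun j : validJ (e + 1) => jnorm (e + 1) j.1) ⁻¹' {k}, g (jnorm (e + 1) j.1.1)
      = ∑' _ : (fun j : validJ (e + 1) => jnorm (e + 1) j.1) ⁻¹' {k}, g k :=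
        tsum_congr fun j => congrArg g j.2
    _ ≤ _ := by
        rw [ENNReal.tsum_const]
        gcongr
        exact_mod_cast ENat.toENNReal_mono (card_jnorm_fiber_le e k)

lemma exists_tsum_validJ_geometric_le (e : ℕ) {ρ : ℝ} (h0 : 0 < ρ) (h1 : ρ < 1) :
    ∃ C : ℝ, 0 < C ∧ ∀ L : ℕ,
      ∑' j : validJ (e + 1), ENNReal.ofReal (ρ ^ ((jnorm (e + 1) j.1 : ℤ) - L).natAbs) ≤
        ENNReal.ofReal (C * (L + 1) ^ e) := by
  have h_summable := summable_natAbs_pow_mul_geometric e h0 h1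
  set G : ℤ → ℝ := fun z => ((z.natAbs : ℝ) + 1) ^ e * ρ ^ z.natAbs
  have hG (z : ℤ) : 0 < G z := by positivity
  refine ⟨2 ^ (e + 1) * ∑' z, G z,
    mul_pos (by positivity) (h_summable.tsum_pos (fun z => (hG z).le) 0 (hG 0)), fun L => ?_⟩
  have h_level (k : ℕ) : ((2 ^ (e + 1) * (k + 1) ^ e : ℕ) : ℝ≥0∞) *
        ENNReal.ofReal (ρ ^ ((k : ℤ) - L).natAbs) ≤
      ENNReal.ofReal (2 ^ (e + 1) * (L + 1) ^ e) * ENNReal.ofReal (G (k - L)) := by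
    have h_le : k + 1 ≤ (L + 1) * (((k : ℤ) - L).natAbs + 1) := by
      have : k ≤ L + ((k : ℤ) - L).natAbs := by omega
      nlinarith [Nat.zero_le (L * ((k : ℤ) - L).natAbs)]
    rw [← ENNReal.ofReal_natCast, ← ENNReal.ofReal_mul (by positivity),
      ← ENNReal.ofReal_mul (by positivity)]
    refine ENNReal.ofReal_le_ofReal ?_
    rw [← mul_assoc, mul_assoc (2 ^ (e + 1)), ← mul_pow]
    push_cast
    gcongr
    exact_mod_cast h_le
  calc ∑' j : validJ (e + 1), ENNReal.ofReal (ρ ^ ((jnorm (e + 1) j.1 : ℤ) - L).natAbs)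
      ≤ ∑' k : ℕ, ((2 ^ (e + 1) * (k + 1) ^ e : ℕ) : ℝ≥0∞) *
          ENNReal.ofReal (ρ ^ ((k : ℤ) - L).natAbs) :=
        tsum_validJ_comp_jnorm_le e fun k => ENNReal.ofReal (ρ ^ ((k : ℤ) - L).natAbs)
    _ ≤ ∑' k : ℕ, ENNReal.ofReal (2 ^ (e + 1) * (L + 1) ^ e) * ENNReal.ofReal (G (k - L)) :=
        ENNReal.tsum_le_tsum h_level
    _ ≤ ENNReal.ofReal (2 ^ (e + 1) * (L + 1) ^ e) * ∑' z : ℤ, ENNReal.ofReal (G z) := by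
        rw [ENNReal.tsum_mul_left]
        gcongr
        exact ENNReal.tsum_comp_le_tsum_of_injective (f := fun k : ℕ => (k : ℤ) - L)
          (fun a b h => by simpa using h) fun z => ENNReal.ofReal (G z)
    _ = ENNReal.ofReal (2 ^ (e + 1) * (∑' z, G z) * (L + 1) ^ e) := by
        rw [← ENNReal.ofReal_tsum_of_nonneg (fun z => (hG z).le) h_summable,
          ← ENNReal.ofReal_mul (by positivity), mul_right_comm]

end LevelSums

lemma log_two_add_one_le {N : ℕ} (hN : 2 ≤ N) :
    (Nat.log 2 N : ℝ) + 1 ≤ 2 / Real.log 2 * Real.log N := by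
  have h_one : (1 : ℝ) ≤ Nat.log 2 N := by exact_mod_cast Nat.log_pos one_lt_two hN
  have h_log : (Nat.log 2 N : ℝ) ≤ Real.logb 2 N := Real.natLog_le_logb N 2
  rw [div_mul_eq_mul_div, mul_div_assoc, Real.log_div_log]
  linarith

lemma besovTerm_eq_rpow_finLpNorm {d : ℕ} {p : ℝ} (q s : ℝ) (f : (Fin d → ℝ) → ℝ)
    (j : Fin d → ℤ) :
    (2 : ℝ) ^ (jnorm d j * (s - 1 / p + 1) * q) *
        (∑ m ∈ Dfin d j, |haarCoeff d f j m| ^ p) ^ (q / p) =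
      (2 ^ (jnorm d j * (s - 1 / p + 1)) * finLpNorm p (Dfin d j) (haarCoeff d f j)) ^ q := by
  rw [Real.mul_rpow (by positivity) (finLpNorm_nonneg _ _ _), ← Real.rpow_mul zero_le_two,
    finLpNorm, ← Real.rpow_mul (Finset.sum_nonneg fun _ _ => by positivity), one_div_mul_eq_div]

theorem besov_s_upper_bound_general (d : ℕ) (hd : 0 < d) (p q s : ℝ) (hp : 1 ≤ p) (hq : 0 < q)
    (hs0 : 0 < s) (hs1 : s < 1 / p) :
    ∃ C : ℝ, 0 < C ∧ ∀ (t : ℕ) (E : Fin d → ℕ → ℕ → ZMod 2), IsOrderSeq 2 t d E →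
      ∀ N : ℕ, 2 ≤ N →
        besovSum d p q s (discSeq d (digitalSeq d E) N) ≤
          ENNReal.ofReal (C * (2 : ℝ) ^ (q * (t : ℝ)) * (N : ℝ) ^ ((s - 1) * q) *
            Real.log N ^ (d - 1)) := by
  obtain ⟨e, rfl⟩ := Nat.exists_eq_add_one.2 hd
  obtain ⟨A, hA, ρ, hρ0, hρ1, h_coeff⟩ :=
    exists_two_rpow_mul_finLpNorm_haarCoeff_le (e + 1) hp hs0 hs1
  obtain ⟨K, hK, h_level⟩ := exists_tsum_validJ_geometric_le e (Real.rpow_pos_of_pos hρ0 q)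
    (Real.rpow_lt_one hρ0.le hρ1 hq)
  refine ⟨A ^ q * K * (2 / Real.log 2) ^ e, by positivity, fun t E hE N hN => ?_⟩
  set F : ℝ := A ^ q * 2 ^ (q * t) * N ^ ((s - 1) * q)
  have h_term (j : validJ (e + 1)) :
      (2 : ℝ) ^ (jnorm (e + 1) j.1 * (s - 1 / p + 1) * q) * (∑ m ∈ Dfin (e + 1) j.1,
          |haarCoeff (e + 1) (discSeq (e + 1) (digitalSeq (e + 1) E) N) j.1 m| ^ p) ^ (q / p) ≤
        F * (ρ ^ q) ^ ((jnorm (e + 1) j.1 : ℤ) - Nat.log 2 N).natAbs := by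
    rw [besovTerm_eq_rpow_finLpNorm]
    refine (Real.rpow_le_rpow (mul_nonneg (by positivity) (finLpNorm_nonneg _ _ _))
      (h_coeff t E hE N (by omega) j.1 j.2) hq.le).trans_eq ?_
    rw [Real.mul_rpow (by positivity) (by positivity),
      Real.mul_rpow (by positivity) (by positivity),
      Real.mul_rpow (by positivity) (by positivity), ← Real.rpow_mul zero_le_two,
      ← Real.rpow_mul (by positivity), Real.rpow_pow_comm hρ0.le, mul_comm (t : ℝ)]
  calc besovSum (e + 1) p q s (discSeq (e + 1) (digitalSeq (e + 1) E) N)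
      ≤ ∑' j : validJ (e + 1), ENNReal.ofReal F *
          ENNReal.ofReal ((ρ ^ q) ^ ((jnorm (e + 1) j.1 : ℤ) - Nat.log 2 N).natAbs) :=
        ENNReal.tsum_le_tsum fun j => by
          rw [← ENNReal.ofReal_mul (by positivity)]
          exact ENNReal.ofReal_le_ofReal (h_term j)
    _ ≤ ENNReal.ofReal F * ENNReal.ofReal (K * (Nat.log 2 N + 1) ^ e) := by
        rw [ENNReal.tsum_mul_left]
        gcongr
        exact h_level _
    _ ≤ ENNReal.ofReal F * ENNReal.ofReal (K * (2 / Real.log 2 * Real.log N) ^ e) := by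
        gcongr
        exact log_two_add_one_le hN
    _ = _ := by
        rw [← ENNReal.ofReal_mul (by positivity), mul_pow]
        congr 1
        simp only [Nat.add_sub_cancel]
        ring

/-- Besov `S^s_{p,q}B` upper bound, `0 < s < 1/p`, for order `2` digital
`(t,d)`-sequences with triangular generating matrices:
`∑_j 2^{|j|(s-1/p+1)q} (∑_m |⟨D^N,h_{j,m}⟩|^p)^{q/p} ≤ C · 2^{qt} · N^{(s-1)q} (log N)^{d-1}`. -/
theorem besov_s_upper_bound (d : ℕ) (hd : 0 < d) (p q s : ℝ) (hp : 1 ≤ p) (hq : 1 ≤ q)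
    (hs0 : 0 < s) (hs1 : s < 1/p) :
    ∃ C : ℝ, 0 < C ∧ ∀ (t : ℕ) (E : Fin d → ℕ → ℕ → ZMod 2),
      IsOrderSeq 2 t d E → Triangular2 d E →
      ∀ N : ℕ, 2 ≤ N →
        besovSum d p q s (discSeq d (digitalSeq d E) N) ≤
          ENNReal.ofReal (C * (2:ℝ) ^ (q * (t:ℝ)) * (N:ℝ) ^ ((s - 1) * q) *
            Real.log N ^ (d - 1)) := by
  obtain ⟨C, hC, h_bound⟩ :=
    besov_s_upper_bound_general d hd p q s hp (zero_lt_one.trans_le hq) hs0 hs1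
  exact ⟨C, hC, fun t E hE _ => h_bound t E hE⟩

end
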